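/- arXiv:1705.06213 — 5 statements merged into one kernel-verified Lean document; each statement's English description precedes it below -/
import Mathlib

section
/- Let G be a group acting k-acylindrically and without edge inversions on a simplicial tree T, where k is a nonnegative integer. Let g1, g2 ∈ G be elliptic elements with Fix(g1) ∩ Fix(g2) = ∅, set h = g1·g2, and let p be a positive integer with 2p ≥ k+1. Then the elements g1 and h^p·g1·h^{−p} generate a rank 2 free product in G. -/
open SimpleGraph Pointwise

section TreeDefs

variable {G : Type*} [Group G]

/-- The action of `G` on the vertices preserves adjacency. -/
def ActsByAut (G : Type*) [Group G] {V : Type*} [MulAction G V] (T : SimpleGraph V) : Prop :=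
  ∀ (g : G) (v w : V), T.Adj v w → T.Adj (g • v) (g • w)

/-- The action has no edge inversions: no element swaps the endpoints of an edge. -/
def NoEdgeInversion (G : Type*) [Group G] {V : Type*} [MulAction G V] (T : SimpleGraph V) : Prop :=
  ∀ (g : G) (v w : V), T.Adj v w → ¬(g • v = w ∧ g • w = v)

/-- The set of vertices fixed by `g`. -/
def Fixed (V : Type*) [MulAction G V] (g : G) : Set V := {v | g • v = v}

/-- `g` is elliptic: it fixes some vertex. -/
def IsElliptic (V : Type*) [MulAction G V] (g : G) : Prop := ∃ v : V, g • v = v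

/-- `g` is hyperbolic: it fixes no vertex. -/
def IsHyperbolic (V : Type*) [MulAction G V] (g : G) : Prop := ¬ ∃ v : V, g • v = v

/-- Translation length of `g`: the infimum of `d(v, g • v)` over all vertices `v`. -/
noncomputable def transLen {V : Type*} [MulAction G V] (T : SimpleGraph V) (g : G) : ℕ :=
  ⨅ v : V, T.dist v (g • v)

/-- The axis of a (hyperbolic) element: the vertices moved exactly the translation length. -/
noncomputable def Axis {V : Type*} [MulAction G V] (T : SimpleGraph V) (g : G) : Set V :=
  {v | T.dist v (g • v) = transLen T g}

/-- Diameter (in `ℕ∞`) of a set of vertices: the sup of pairwise simplicial distances. -/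
noncomputable def setDiam {V : Type*} (T : SimpleGraph V) (S : Set V) : ℕ∞ :=
  ⨆ v ∈ S, ⨆ w ∈ S, (T.dist v w : ℕ∞)

/-- Minimal simplicial distance between two sets of vertices. -/
noncomputable def setDist {V : Type*} (T : SimpleGraph V) (A B : Set V) : ℕ :=
  sInf {n : ℕ | ∃ v ∈ A, ∃ w ∈ B, T.dist v w = n}

/-- The action of `G` on `T` is `k`-acylindrical: the fixed-point set of every nontrivial
elliptic element has diameter at most `k`. -/
def AcylindricalAction {V : Type*} (T : SimpleGraph V) (G : Type*) [Group G] [MulAction G V]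
    (k : ℕ) : Prop :=
  ∀ g : G, g ≠ 1 → IsElliptic V g → setDiam T (Fixed V g) ≤ (k : ℕ∞)

/-- `a` and `b` generate a rank 2 free product in `G`: the canonical homomorphism
`⟨a⟩ ∗ ⟨b⟩ → G` from the free product of the cyclic subgroups generated by `a` and `b`
is injective. -/
def IsRank2FreeProduct {G : Type*} [Group G] (a b : G) : Prop :=
  Function.Injective
    (Monoid.Coprod.lift (Subgroup.zpowers a).subtype (Subgroup.zpowers b).subtype)

/-- `a` and `b` freely generate a rank 2 free subgroup of `G`: the homomorphism from the
free group on two generators sending the generators to `a` and `b` is injective. -/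
def FreelyGeneratesFreeSubgroup {G : Type*} [Group G] (a b : G) : Prop :=
  Function.Injective ((FreeGroup.lift (fun i : Bool => if i then a else b)) : FreeGroup Bool →* G)

/-- `a` and `b` freely generate a rank 2 free subsemigroup of `G`: the monoid homomorphism
from the free monoid on two generators sending the generators to `a` and `b` is injective. -/
def FreelyGeneratesFreeSubsemigroup {G : Type*} [Monoid G] (a b : G) : Prop :=
  Function.Injective ((FreeMonoid.lift (fun i : Bool => if i then a else b)) : FreeMonoid Bool →* G)

/-- A line in a simplicial tree: the image of an isometric embedding of `ℤ`. -/
def IsLine {V : Type*} (T : SimpleGraph V) (L : Set V) : Prop :=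
  ∃ f : ℤ → V, (∀ m n : ℤ, T.dist (f m) (f n) = (m - n).natAbs) ∧ L = Set.range f

end TreeDefs


section TreeGeometry

variable {V : Type*} {T : SimpleGraph V}

/-- In a tree, a point on the geodesic from `x` to `y` lies on `[x,w]` or on `[w,y]`. -/
lemma tree_cut (hT : T.IsTree) {x m y : V} (h : T.dist x m + T.dist m y = T.dist x y) (w : V) :
    T.dist x m + T.dist m w = T.dist x w ∨ T.dist w m + T.dist m y = T.dist w y := by
  classical
  have hc := hT.connected
  obtain ⟨p1, hp1⟩ := hc.exists_walk_length_eq_dist x m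
  obtain ⟨p2, hp2⟩ := hc.exists_walk_length_eq_dist m y
  obtain ⟨q1, hq1⟩ := hc.exists_walk_length_eq_dist x w
  obtain ⟨q2, hq2⟩ := hc.exists_walk_length_eq_dist w y
  have hp : (p1.append p2).IsPath := by
    apply Walk.isPath_of_length_eq_dist
    rw [Walk.length_append]; omega
  have hq : (q1.append q2).bypass.IsPath := Walk.bypass_isPath _
  have he := hT.isAcyclic.path_unique ⟨_, hp⟩ ⟨_, hq⟩
  have he' : p1.append p2 = (q1.append q2).bypass := congrArg Subtype.val he
  have hm : m ∈ (p1.append p2).support := by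
    rw [Walk.mem_support_append_iff]; left; simp
  rw [he'] at hm
  have hm2 := Walk.support_bypass_subset_support _ hm
  rw [Walk.mem_support_append_iff] at hm2
  have key : ∀ {u v : V} (q : T.Walk u v), q.length = T.dist u v → m ∈ q.support →
      T.dist u m + T.dist m v = T.dist u v := by
    intro u v q hq hm
    have h1 := T.dist_le (q.takeUntil m hm)
    have h2 := T.dist_le (q.dropUntil m hm)
    have h3 := congrArg Walk.length (q.take_spec hm)
    rw [Walk.length_append] at h3
    have h4 := hc.dist_triangle (u := u) (v := m) (w := v)
    omega
  rcases hm2 with h | h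
  · left; exact key q1 hq1 h
  · right; exact key q2 hq2 h

lemma exists_on_geodesic (hc : T.Connected) (x y : V) (n : ℕ) (hn : n ≤ T.dist x y) :
    ∃ z, T.dist x z = n ∧ T.dist z y = T.dist x y - n := by
  obtain ⟨p, hp⟩ := hc.exists_walk_length_eq_dist x y
  refine ⟨p.getVert n, ?_⟩
  have h1 := T.dist_le (p.take n)
  have h2 := T.dist_le (p.drop n)
  rw [Walk.take_length] at h1
  rw [Walk.drop_length] at h2
  have h4 := hc.dist_triangle (u := x) (v := p.getVert n) (w := y)
  omega

/-- Medians exist in trees. -/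
lemma tree_median (hT : T.IsTree) (z y : V) (n : ℕ) : ∀ x : V, T.dist x y = n →
    ∃ m, T.dist x m + T.dist m y = T.dist x y ∧ T.dist z m + T.dist m x = T.dist z x ∧
      T.dist z m + T.dist m y = T.dist z y := by
  have hc := hT.connected
  induction n with
  | zero =>
    intro x hx
    have : x = y := hc.dist_eq_zero_iff.1 hx
    subst this
    exact ⟨x, by simp⟩
  | succ n ih =>
    intro x hx
    obtain ⟨x', h1, h2⟩ := exists_on_geodesic hc x y 1 (by omega)
    have hadj : T.Adj x x' := dist_eq_one_iff_adj.1 h1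
    obtain ⟨m, m1, m2, m3⟩ := ih x' (by omega)
    have t1 := hc.dist_triangle (u := x) (v := x') (w := m)
    have t2 := hc.dist_triangle (u := x) (v := m) (w := y)
    have c1 : T.dist m x' = T.dist x' m := SimpleGraph.dist_comm
    have c2 : T.dist m x = T.dist x m := SimpleGraph.dist_comm
    have c3 : T.dist x' x = T.dist x x' := SimpleGraph.dist_comm
    rcases hT.dist_eq_dist_add_one_of_adj z hadj with h | h
    · exact ⟨m, by omega, by omega, m3⟩
    · have hcut := tree_cut hT (x := z) (m := x) (y := x') (by omega) y
      have c4 : T.dist y x' = T.dist x' y := SimpleGraph.dist_comm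
      have c5 : T.dist y x = T.dist x y := SimpleGraph.dist_comm
      refine ⟨x, by simp, by simp, ?_⟩
      rcases hcut with h | h
      · exact h
      · omega

/-- The four point condition for trees. -/
lemma four_point (hT : T.IsTree) (x y z w : V) :
    T.dist x y + T.dist z w ≤ T.dist x z + T.dist y w ∨
    T.dist x y + T.dist z w ≤ T.dist x w + T.dist y z := by
  have hc := hT.connected
  obtain ⟨m, m1, m2, m3⟩ := tree_median hT z y _ x rfl
  have t := hc.dist_triangle (u := z) (v := m) (w := w)
  have c1 : T.dist m w = T.dist w m := SimpleGraph.dist_comm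
  have c2 : T.dist m x = T.dist x m := SimpleGraph.dist_comm
  have c3 : T.dist z x = T.dist x z := SimpleGraph.dist_comm
  have c4 : T.dist z y = T.dist y z := SimpleGraph.dist_comm
  have c5 : T.dist w y = T.dist y w := SimpleGraph.dist_comm
  rcases tree_cut hT m1 w with h | h
  · right; omega
  · left; omega

/-- Twice the Gromov product. -/
noncomputable def gp (T : SimpleGraph V) (a u v : V) : ℤ :=
  (T.dist a u : ℤ) + T.dist a v - T.dist u v

lemma gp_comm (a u v : V) : gp T a u v = gp T a v u := by
  unfold gp; rw [SimpleGraph.dist_comm (u := u)]; ring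

lemma gp_self (a u : V) : gp T a u u = 2 * T.dist a u := by
  unfold gp; simp; ring

lemma gp_nonneg (hT : T.IsTree) (a u v : V) : 0 ≤ gp T a u v := by
  have := hT.connected.dist_triangle (u := u) (v := a) (w := v)
  have c : T.dist u a = T.dist a u := SimpleGraph.dist_comm
  unfold gp; omega

lemma gp_min (hT : T.IsTree) {a u v w : V} {n : ℤ} (h1 : n ≤ gp T a u v) (h2 : n ≤ gp T a v w) :
    n ≤ gp T a u w := by
  have h := four_point hT a v u w
  have c : T.dist v u = T.dist u v := SimpleGraph.dist_comm
  unfold gp at *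
  omega

lemma gp_swap (a c v : V) : gp T c v a = 2 * T.dist a c - gp T a v c := by
  unfold gp
  rw [SimpleGraph.dist_comm (u := v) (v := c), SimpleGraph.dist_comm (u := c) (v := a), SimpleGraph.dist_comm (u := v) (v := a)]
  ring

/-- Zigzag local-to-global. -/
lemma zigzag (hT : T.IsTree) (A B : ℕ → V) (D : ℕ) (hD : 0 < D)
    (h1 : ∀ n, T.dist (A n) (B n) = D) (h2 : ∀ n, T.dist (B n) (A (n + 1)) = D)
    (h3 : ∀ n, T.dist (A n) (A (n + 1)) = 2 * D) (h4 : ∀ n, T.dist (B n) (B (n + 1)) = 2 * D)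
    (n : ℕ) : T.dist (A 0) (A n) = (2 * n) * D ∧ T.dist (A 0) (B n) = (2 * n + 1) * D := by
  have hc := hT.connected
  have step : ∀ x y z e, T.dist (A 0) x = e → T.dist (A 0) y = e + D → T.dist x y = D →
      T.dist y z = D → T.dist x z = 2 * D → T.dist (A 0) z = e + 2 * D := by
    intro x y z e a1 a2 a3 a4 a5
    have f := four_point hT (A 0) y x z
    have t := hc.dist_triangle (u := A 0) (v := y) (w := z)
    have c : T.dist y x = T.dist x y := SimpleGraph.dist_comm
    omega
  induction n with
  | zero => simp [h1]
  | succ n ih =>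
    obtain ⟨i1, i2⟩ := ih
    have e1 : T.dist (A 0) (A (n + 1)) = (2 * n) * D + 2 * D :=
      step _ _ _ _ i1 (by rw [i2]; ring) (h1 n) (h2 n) (h3 n)
    have e2 : T.dist (A 0) (B (n + 1)) = (2 * n + 1) * D + 2 * D :=
      step _ _ _ _ i2 (by rw [e1]; ring) (h2 n) (h1 _) (h4 n)
    refine ⟨by rw [e1]; ring, by rw [e2]; ring⟩

variable {G : Type*} [Group G] [MulAction G V]

lemma tree_dist_smul_le (hT : T.IsTree) (hAct : ActsByAut G T) (g : G) (v w : V) :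
    T.dist (g • v) (g • w) ≤ T.dist v w := by
  obtain ⟨p, hp⟩ := hT.connected.exists_walk_length_eq_dist v w
  let f : T →g T := ⟨fun v => g • v, fun {a b} h => hAct g a b h⟩
  have := T.dist_le (p.map f)
  rw [Walk.length_map, hp] at this
  exact this

lemma tree_dist_smul (hT : T.IsTree) (hAct : ActsByAut G T) (g : G) (v w : V) :
    T.dist (g • v) (g • w) = T.dist v w := by
  apply le_antisymm (tree_dist_smul_le hT hAct g v w)
  simpa using tree_dist_smul_le hT hAct g⁻¹ (g • v) (g • w)

lemma gp_smul (hT : T.IsTree) (hAct : ActsByAut G T) (g : G) {a : V} (ha : g • a = a) (u v : V) :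
    gp T a (g • u) (g • v) = gp T a u v := by
  have h1 := tree_dist_smul hT hAct g a u
  have h2 := tree_dist_smul hT hAct g a v
  have h3 := tree_dist_smul hT hAct g u v
  rw [ha] at h1 h2
  unfold gp
  rw [h1, h2, h3]

/-- If `u`, `v` leave `a` in the same direction and `g` moves that direction for `u`, then
so it does for `v`. -/
lemma gp_transfer (hT : T.IsTree) (hAct : ActsByAut G T) (g : G) {a : V} (ha : g • a = a)
    {u v : V} (huv : 1 ≤ gp T a u v) (hu : gp T a u (g • u) = 0) : gp T a v (g • v) = 0 := by
  by_contra hne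
  have h0 := gp_nonneg hT a v (g • v)
  have h1 : 1 ≤ gp T a v (g • v) := by omega
  have h2 : 1 ≤ gp T a (g • v) (g • u) := by
    rw [gp_smul hT hAct g ha, gp_comm]; exact huv
  have := gp_min hT (gp_min hT huv h1) h2
  omega

/-- The ping-pong estimate. -/
lemma key_estimate (hT : T.IsTree) (hAct : ActsByAut G T) {k p : ℕ}
    (hAcyl : AcylindricalAction T G k) (hp : 1 ≤ p) (hpk : k + 1 ≤ 2 * p)
    {g0 : G} {a c : V} (ha : g0 • a = a) (hac : p ≤ T.dist a c) (hc0 : gp T a c (g0 • c) = 0)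
    {g : G} (hg : g ∈ Subgroup.zpowers g0) (hg1 : g ≠ 1) {v : V} (hv : 2 * (p : ℤ) ≤ gp T a v c) :
    gp T a (g • v) c < 2 * (p : ℤ) := by
  by_contra hcon
  rw [not_lt] at hcon
  obtain ⟨x, hx1, hx2⟩ := exists_on_geodesic hT.connected a c p hac
  have hga : g • a = a := by
    have : g0 ∈ MulAction.stabilizer G a := ha
    exact (Subgroup.zpowers_le.2 this) hg
  have hcomm : g * g0 = g0 * g := by
    obtain ⟨n, rfl⟩ := Subgroup.mem_zpowers_iff.1 hg
    exact ((Commute.refl g0).zpow_left n)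
  have hxc : gp T a x c = 2 * p := by
    unfold gp; omega
  have hcx : gp T a c x = 2 * p := by rw [gp_comm, hxc]
  have e1 : 2 * (p : ℤ) ≤ gp T a (g • v) (g • x) := by
    rw [gp_smul hT hAct g hga]
    exact gp_min hT hv hcx.ge
  have e2 : 2 * (p : ℤ) ≤ gp T a x (g • x) :=
    gp_min hT (gp_min hT hxc.ge (by rw [gp_comm]; exact hcon)) e1
  have hagx : T.dist a (g • x) = p := by
    have := tree_dist_smul hT hAct g a x
    rw [hga] at this; omega
  have hgx : g • x = x := by
    have : T.dist x (g • x) = 0 := by unfold gp at e2; omega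
    exact (hT.connected.dist_eq_zero_iff.1 this).symm
  have hx0 : gp T a x (g0 • x) = 0 := gp_transfer hT hAct g0 ha (by omega) hc0
  have hag0x : T.dist a (g0 • x) = p := by
    have := tree_dist_smul hT hAct g0 a x
    rw [ha] at this; omega
  have hd : T.dist x (g0 • x) = 2 * p := by unfold gp at hx0; omega
  have hg0x : g • (g0 • x) = g0 • x := by
    rw [← mul_smul, hcomm, mul_smul, hgx]
  have hdiam := hAcyl g hg1 ⟨x, hgx⟩
  have hle : (T.dist x (g0 • x) : ℕ∞) ≤ setDiam T (Fixed V g) := by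
    unfold setDiam
    exact le_iSup₂_of_le x hgx (le_iSup₂_of_le (g0 • x) hg0x le_rfl)
  have := hle.trans hdiam
  rw [hd] at this
  have h' : 2 * p ≤ k := by exact_mod_cast this
  omega

/-- If `a` is a point of `Fix g` nearest to `b`, then `[a,b]` and `[a,gb]` meet only in `a`. -/
lemma nearest_gp (hT : T.IsTree) (hAct : ActsByAut G T) {g : G} {a b : V} (ha : g • a = a)
    (hab : 1 ≤ T.dist a b) (hmin : ∀ x : V, g • x = x → T.dist a b ≤ T.dist x b) :
    T.dist b (g • b) = 2 * T.dist a b := by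
  obtain ⟨x, hx1, hx2⟩ := exists_on_geodesic hT.connected a b 1 hab
  have hgx1 : T.dist a (g • x) = 1 := by
    have := tree_dist_smul hT hAct g a x
    rw [ha] at this; omega
  have hgb : T.dist a (g • b) = T.dist a b := by
    have := tree_dist_smul hT hAct g a b
    rw [ha] at this; omega
  have hx : gp T a x (g • x) = 0 := by
    have hne : x ≠ g • x := by
      intro h
      have := hmin x h.symm
      omega
    have hnadj : T.dist x (g • x) ≠ 1 := by
      intro h
      have := hT.dist_ne_of_adj a (dist_eq_one_iff_adj.1 h)
      omega
    have := hT.connected.pos_dist_of_ne hne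
    have h0 := gp_nonneg hT a x (g • x)
    unfold gp at *
    omega
  have hb := gp_transfer hT hAct g ha (u := x) (v := b) (by unfold gp; omega) hx
  unfold gp at hb
  omega

end TreeGeometry

section PingPong

open Monoid

variable {G V : Type*} [Group G] [MulAction G V]

lemma neword_pp {H : Bool → Type*} [∀ i, Group (H i)] (f : ∀ i, H i →* G) (X : Bool → Set V)
    (hpp : ∀ i, ∀ h : H i, h ≠ 1 → ∀ v ∈ X (!i), f i h • v ∈ X i)
    {i j : Bool} (w : CoprodI.NeWord H i j) :
    w.head ≠ 1 ∧ ∀ v ∈ X (!j), ∃ u ∈ X (!i), CoprodI.lift f w.prod • v = f i w.head • u := by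
  induction w with
  | singleton x hx => exact ⟨hx, fun v hv => ⟨v, hv, by simp⟩⟩
  | @append i j k l w₁ hne w₂ ih₁ ih₂ =>
    refine ⟨ih₁.1, fun v hv => ?_⟩
    obtain ⟨u, hu, hu'⟩ := ih₂.2 v hv
    have hk : k = !j := by cases j <;> cases k <;> simp_all
    have h2 : f k w₂.head • u ∈ X (!j) := by
      have := hpp k _ ih₂.1 u hu
      rwa [← hk]
    obtain ⟨u', hu1, hu2⟩ := ih₁.2 _ h2
    refine ⟨u', hu1, ?_⟩
    rw [CoprodI.NeWord.append_prod, map_mul, mul_smul, hu', hu2, CoprodI.NeWord.append_head]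

lemma coprodI_pp {H : Bool → Type*} [∀ i, Group (H i)] (f : ∀ i, H i →* G) (X : Bool → Set V)
    (hdisj : ∀ i v, v ∈ X i → v ∉ X (!i)) (x : Bool → V) (hx : ∀ i, x i ∈ X i)
    (hfix : ∀ i (h : H i), f i h • x i = x i)
    (hpp : ∀ i, ∀ h : H i, h ≠ 1 → ∀ v ∈ X (!i), f i h • v ∈ X i) :
    Function.Injective (CoprodI.lift f) := by
  classical
  have hne : ∀ {i j : Bool} (w : CoprodI.NeWord H i j), CoprodI.lift f w.prod ≠ 1 := by
    intro i j w h1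
    obtain ⟨hh, hw⟩ := neword_pp f X hpp w
    obtain ⟨u, hu, hu'⟩ := hw (x (!j)) (hx _)
    rw [h1, one_smul] at hu'
    by_cases hij : i = j
    · subst hij
      have := hpp i _ hh u hu
      rw [← hu'] at this
      exact hdisj _ _ this (hx _)
    · have hk : (!j) = i := by cases j <;> cases i <;> simp_all
      rw [hk] at hu'
      have h2 := hfix i w.head
      nth_rewrite 2 [hu'] at h2
      have h3 : x i = u := smul_left_cancel _ h2
      exact hdisj _ _ (hx i) (h3 ▸ hu)
  rw [injective_iff_map_eq_one]
  rw [(CoprodI.Word.equiv (M := H)).forall_congr_left]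
  intro w hw
  by_contra hcon
  have hwe : w ≠ CoprodI.Word.empty := by
    rintro rfl
    apply hcon
    exact CoprodI.Word.prod_empty
  obtain ⟨i, j, w', rfl⟩ := CoprodI.NeWord.of_word w hwe
  exact hne w' hw

lemma coprod_pp (a b : G) (XA XB : Set V) (hdisj : ∀ v, v ∈ XA → v ∉ XB)
    (x y : V) (hx : x ∈ XA) (hy : y ∈ XB) (hax : a • x = x) (hby : b • y = y)
    (hA : ∀ g ∈ Subgroup.zpowers a, g ≠ 1 → ∀ v ∈ XB, g • v ∈ XA)
    (hB : ∀ g ∈ Subgroup.zpowers b, g ≠ 1 → ∀ v ∈ XA, g • v ∈ XB) :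
    IsRank2FreeProduct a b := by
  let s : Bool → G := fun i => cond i a b
  let H : Bool → Type _ := fun i => Subgroup.zpowers (s i)
  let _ : ∀ i, Group (H i) := fun i => inferInstanceAs (Group (Subgroup.zpowers (s i)))
  let f : ∀ i, H i →* G := fun i => (Subgroup.zpowers (s i)).subtype
  have hinj : Function.Injective (CoprodI.lift f) := by
    refine coprodI_pp f (fun i => cond i XA XB) ?_ (fun i => cond i x y) ?_ ?_ ?_
    · rintro (_ | _) v hv
      · exact fun h => hdisj v h hv
      · exact hdisj v hv
    · rintro (_ | _)
      · exact hy
      · exact hx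
    · rintro (_ | _) ⟨h, hh⟩
      · exact (Subgroup.zpowers_le.2 (show b ∈ MulAction.stabilizer G y from hby)) hh
      · exact (Subgroup.zpowers_le.2 (show a ∈ MulAction.stabilizer G x from hax)) hh
    · rintro (_ | _) ⟨h, hh⟩ h1 v hv
      · exact hB h hh (fun e => h1 (Subtype.ext e)) v hv
      · exact hA h hh (fun e => h1 (Subtype.ext e)) v hv
  let φ : Coprod (Subgroup.zpowers a) (Subgroup.zpowers b) →* CoprodI H :=
    Coprod.lift (CoprodI.of (M := H) (i := true)) (CoprodI.of (M := H) (i := false))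
  let e : ∀ i, H i →* Coprod (Subgroup.zpowers a) (Subgroup.zpowers b) := fun i =>
    match i with
    | true => Coprod.inl
    | false => Coprod.inr
  let ψ : CoprodI H →* Coprod (Subgroup.zpowers a) (Subgroup.zpowers b) := CoprodI.lift e
  have h1 : ψ.comp φ = MonoidHom.id _ := by
    apply Coprod.hom_ext
    · ext z
      exact CoprodI.lift_of (fi := e) (i := true) z
    · ext z
      exact CoprodI.lift_of (fi := e) (i := false) z
  have hφ : Function.Injective φ := by
    apply Function.LeftInverse.injective (g := ψ)
    intro z
    exact DFunLike.congr_fun h1 z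
  have h2 : Coprod.lift (Subgroup.zpowers a).subtype (Subgroup.zpowers b).subtype =
      (CoprodI.lift f).comp φ := by
    apply Coprod.hom_ext
    · ext z
      exact (CoprodI.lift_of (fi := f) (i := true) z).symm
    · ext z
      exact (CoprodI.lift_of (fi := f) (i := false) z).symm
  unfold IsRank2FreeProduct
  rw [h2]
  exact hinj.comp hφ

end PingPong

/-- If `G` acts `k`-acylindrically without edge inversions on a simplicial
tree, `g1, g2` are elliptic with disjoint fixed-point sets, `h = g1 * g2`, and `p` is a
positive integer with `2p ≥ k + 1`, then `g1` and `h^p * g1 * h^(-p)` generate a rank 2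
free product in `G`. -/
theorem statement0 {G V : Type*} [Group G] [MulAction G V] (T : SimpleGraph V)
    (hT : T.IsTree) (hAct : ActsByAut G T) (hNoInv : NoEdgeInversion G T)
    (k : ℕ) (hAcyl : AcylindricalAction T G k)
    (g1 g2 : G) (hg1 : IsElliptic V g1) (hg2 : IsElliptic V g2)
    (hdisj : Fixed V g1 ∩ Fixed V g2 = (∅ : Set V))
    (p : ℕ) (hp : 1 ≤ p) (hpk : k + 1 ≤ 2 * p) :
    IsRank2FreeProduct g1 ((g1 * g2) ^ p * g1 * ((g1 * g2) ^ p)⁻¹) := by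
  classical
  have hds : ∀ (g : G) (v w : V), T.dist (g • v) (g • w) = T.dist v w :=
    tree_dist_smul hT hAct
  -- nearest points
  obtain ⟨a, b, ha, hb, hmin⟩ : ∃ a b : V, g1 • a = a ∧ g2 • b = b ∧
      ∀ x y : V, g1 • x = x → g2 • y = y → T.dist a b ≤ T.dist x y := by
    obtain ⟨a0, ha0⟩ := hg1
    obtain ⟨b0, hb0⟩ := hg2
    have hex : ∃ n : ℕ, ∃ x y : V, g1 • x = x ∧ g2 • y = y ∧ T.dist x y = n :=
      ⟨_, a0, b0, ha0, hb0, rfl⟩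
    obtain ⟨x, y, hx, hy, hxy⟩ := Nat.find_spec hex
    refine ⟨x, y, hx, hy, fun x' y' hx' hy' => ?_⟩
    rw [hxy]
    exact Nat.find_min' hex ⟨x', y', hx', hy', rfl⟩
  have hab : a ≠ b := by
    rintro rfl
    have : a ∈ Fixed V g1 ∩ Fixed V g2 := ⟨ha, hb⟩
    rw [hdisj] at this
    exact this
  obtain ⟨D, hD⟩ : ∃ D, T.dist a b = D := ⟨_, rfl⟩
  have hDpos : 1 ≤ D := hD ▸ hT.connected.pos_dist_of_ne hab
  have hba : T.dist b a = D := by rw [SimpleGraph.dist_comm, hD]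
  have hbb : T.dist b (g1 • b) = 2 * D := by
    rw [← hD]
    exact nearest_gp hT hAct ha (by omega) (fun x hx => hmin x b hx hb)
  have haa : T.dist a (g2 • a) = 2 * D := by
    rw [← hba]
    refine nearest_gp hT hAct hb (by omega) (fun x hx => ?_)
    rw [hba, ← hD, SimpleGraph.dist_comm (u := x)]
    exact hmin a x ha hx
  obtain ⟨h, hh⟩ : ∃ h, g1 * g2 = h := ⟨_, rfl⟩
  rw [hh]
  have hhb : h • b = g1 • b := by rw [← hh, mul_smul, hb]
  have hha : h • a = g1 • (g2 • a) := by rw [← hh, mul_smul]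
  have l1 : T.dist a (h • b) = D := by
    rw [hhb]; nth_rewrite 1 [← ha]; rw [hds, hD]
  have l2 : T.dist b (h • b) = 2 * D := by rw [hhb, hbb]
  have l3 : T.dist a (h • a) = 2 * D := by
    rw [hha]; nth_rewrite 1 [← ha]; rw [hds, haa]
  have k1 : ∀ n : ℕ, T.dist (h ^ n • a) (h ^ (n + 1) • b) = D := by
    intro n; rw [pow_succ, mul_smul, hds, l1]
  have k2 : ∀ n : ℕ, T.dist (h ^ (n + 1) • b) (h ^ (n + 1) • a) = D := by
    intro n; rw [hds, hba]
  have k3 : ∀ n : ℕ, T.dist (h ^ n • a) (h ^ (n + 1) • a) = 2 * D := by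
    intro n; rw [pow_succ, mul_smul, hds, l3]
  have k4 : ∀ n : ℕ, T.dist (h ^ n • b) (h ^ (n + 1) • b) = 2 * D := by
    intro n; rw [pow_succ, mul_smul, hds, l2]
  obtain ⟨q, rfl⟩ : ∃ q, p = q + 1 := ⟨p - 1, by omega⟩
  have Z1 := zigzag hT (fun n => h ^ n • a) (fun n => h ^ (n + 1) • b) D hDpos k1 k2 k3
    (fun n => k4 (n + 1))
  have Z2 := zigzag hT (fun n => h ^ (n + 1) • b) (fun n => h ^ (n + 1) • a) D hDpos k2
    (fun n => k1 (n + 1)) (fun n => k4 (n + 1)) (fun n => k3 (n + 1))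
  have P1 : T.dist a (h ^ (q + 1) • a) = (2 * (q + 1)) * D := by simpa using (Z1 (q + 1)).1
  have P2 : T.dist a (h ^ (q + 1) • b) = (2 * q + 1) * D := by simpa using (Z1 q).2
  have P3 : T.dist (h • b) (h ^ (q + 1) • a) = (2 * q + 1) * D := by simpa using (Z2 q).2
  obtain ⟨c, hc⟩ : ∃ c, h ^ (q + 1) • a = c := ⟨_, rfl⟩
  obtain ⟨t, ht⟩ : ∃ t, h ^ (q + 1) = t := ⟨_, rfl⟩
  rw [ht] at hc P2 ⊢
  rw [ht, hc] at P1 P3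
  have hN : 2 * (q + 1) ≤ T.dist a c := by
    rw [P1]; exact Nat.le_mul_of_pos_right _ hDpos
  have hexp : (2 * (q + 1)) * D = (2 * q + 1) * D + D := by ring
  -- direction at `a`
  have Ga : gp T a c (g1 • c) = 0 := by
    refine gp_transfer hT hAct g1 ha (u := h • b) ?_ ?_
    · unfold gp; rw [P3, l1, P1]; omega
    · have e1 : T.dist a (g1 • h • b) = D := by
        nth_rewrite 1 [← ha]; rw [hds, l1]
      have e2 : T.dist (h • b) (g1 • h • b) = 2 * D := by
        rw [hhb, hds, hbb]
      unfold gp; rw [l1, e1, e2]; push_cast; ring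
  have hbc : (t * g1 * t⁻¹) • c = c := by
    rw [← hc, ← mul_smul, inv_mul_cancel_right, mul_smul, ha]
  -- direction at `c`
  have Gc : gp T c a ((t * g1 * t⁻¹) • a) = 0 := by
    have hca : T.dist c a = (2 * (q + 1)) * D := by rw [SimpleGraph.dist_comm, P1]
    have hctb : T.dist c (t • b) = D := by rw [← hc, hds, hD]
    refine gp_transfer hT hAct (t * g1 * t⁻¹) hbc (u := t • b) ?_ ?_
    · unfold gp
      rw [SimpleGraph.dist_comm (u := t • b), P2, hctb, hca]; omega
    · have e0 : (t * g1 * t⁻¹) • (t • b) = t • (g1 • b) := by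
        rw [← mul_smul, inv_mul_cancel_right, mul_smul]
      have e1 : T.dist c (t • g1 • b) = D := by
        rw [← hc, hds]; nth_rewrite 1 [← ha]; rw [hds, hD]
      rw [e0]; unfold gp
      rw [hctb, e1, hds, hbb]; push_cast; ring
  have hca' : T.dist c a = T.dist a c := SimpleGraph.dist_comm
  refine coprod_pp g1 (t * g1 * t⁻¹) {v : V | gp T a v c < 2 * ((q + 1 : ℕ) : ℤ)}
    {v : V | 2 * ((q + 1 : ℕ) : ℤ) ≤ gp T a v c} ?_ a c ?_ ?_ ha hbc ?_ ?_
  · intro v hv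
    have hv1 : gp T a v c < 2 * ((q + 1 : ℕ) : ℤ) := hv
    exact not_le.2 hv1
  · show gp T a a c < _
    have : gp T a a c = 0 := by unfold gp; simp
    omega
  · show _ ≤ gp T a c c
    rw [gp_self]; omega
  · intro g hg hg1 v hv
    exact key_estimate hT hAct hAcyl hp hpk ha (by omega) Ga hg hg1 hv
  · intro g hg hg1 v hv
    have hv' : gp T a v c < 2 * ((q + 1 : ℕ) : ℤ) := hv
    have s1 := gp_swap (T := T) a c v
    have := key_estimate hT hAct hAcyl hp hpk hbc (c := a) (by omega) Gc hg hg1 (v := v) (by omega)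
    have s2 := gp_swap (T := T) a c (g • v)
    show _ ≤ gp T a (g • v) c
    omega
end

section
/- Let G be a group acting k-acylindrically and without edge inversions on a simplicial tree T, where k is a nonnegative integer. Let h1, h2 ∈ G be hyperbolic elements with Axis(h1) ≠ Axis(h2) and diam(Axis(h1) ∩ Axis(h2)) ≤ 3k. Then for every integer q ≥ 3k+1 the elements h1^q and h2^q freely generate a rank 2 free subgroup of G. -/
open SimpleGraph Pointwise

section Helpers

open SimpleGraph

variable {V : Type*} {T : SimpleGraph V}

/-- In a tree, a vertex has at most one neighbour closer to a given vertex. -/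
lemma tree_parent_unique (hT : T.IsTree) {v u w w' : V} (hw : T.Adj u w) (hw' : T.Adj u w')
    (h : T.dist v u = T.dist v w + 1) (h' : T.dist v u = T.dist v w' + 1) : w = w' := by
  obtain ⟨p, hp⟩ := hT.connected.exists_walk_length_eq_dist v w
  obtain ⟨p', hp'⟩ := hT.connected.exists_walk_length_eq_dist v w'
  have h1 : (p.concat hw.symm).IsPath := by
    apply Walk.isPath_of_length_eq_dist
    rw [Walk.length_concat]; omega
  have h2 : (p'.concat hw'.symm).IsPath := by
    apply Walk.isPath_of_length_eq_dist
    rw [Walk.length_concat]; omega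
  have := (hT.isAcyclic.subsingleton_path _ _).elim ⟨_, h1⟩ ⟨_, h2⟩
  have h3 : p.concat hw.symm = p'.concat hw'.symm := congrArg Subtype.val this
  have h4 := congrArg (fun q => q.penultimate) h3
  simpa using h4

/-- A closer neighbour exists. -/
lemma exists_closer (hT : T.IsTree) {v u : V} (h : 0 < T.dist v u) :
    ∃ w, T.Adj u w ∧ T.dist v u = T.dist v w + 1 := by
  obtain ⟨p, hp⟩ := hT.connected.exists_walk_length_eq_dist u v
  cases p with
  | nil => simp at h
  | cons hadj q =>
    refine ⟨_, hadj, ?_⟩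
    have h1 := dist_le q
    have h2 := hT.dist_eq_dist_add_one_of_adj v hadj
    rw [Walk.length_cons] at hp
    rw [SimpleGraph.dist_comm] at hp h1
    omega

/-- Nonbacktracking line. -/
def NBLine (T : SimpleGraph V) (f : ℤ → V) : Prop :=
  (∀ n, T.Adj (f n) (f (n + 1))) ∧ ∀ n, f n ≠ f (n + 2)

lemma NBLine.step (hT : T.IsTree) {f : ℤ → V} (hf : NBLine T f) (v : V) (n : ℤ) :
    T.dist v (f n) = T.dist v (f (n + 1)) + 1 ∨ T.dist v (f (n + 1)) = T.dist v (f n) + 1 :=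
  hT.dist_eq_dist_add_one_of_adj v (hf.1 n)

lemma NBLine.convex (hT : T.IsTree) {f : ℤ → V} (hf : NBLine T f) (v : V) (n : ℤ) :
    ¬ (T.dist v (f (n + 1)) = T.dist v (f n) + 1 ∧
      T.dist v (f (n + 1)) = T.dist v (f (n + 2)) + 1) := by
  rintro ⟨h1, h2⟩
  refine hf.2 n (tree_parent_unique hT (hf.1 n).symm ?_ h1 h2)
  have := hf.1 (n + 1)
  rwa [show n + 1 + 1 = n + 2 by ring] at this

lemma NBLine.exists_proj (hT : T.IsTree) {f : ℤ → V} (hf : NBLine T f) (v : V) :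
    ∃ p : ℤ, ∀ n, (T.dist v (f n) : ℤ) = T.dist v (f p) + |n - p| := by
  obtain ⟨p, hp⟩ : ∃ p, ∀ n, T.dist v (f p) ≤ T.dist v (f n) := by
    obtain ⟨m, ⟨p, hp⟩, hm⟩ := WellFounded.has_min (wellFounded_lt (α := ℕ))
      (Set.range fun n => T.dist v (f n)) ⟨_, 0, rfl⟩
    refine ⟨p, fun n => ?_⟩
    have := hm _ ⟨n, rfl⟩
    simp only at hp this
    omega
  have hr : ∀ n : ℕ, T.dist v (f (p + n + 1)) = T.dist v (f (p + n)) + 1 := by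
    intro n
    induction n with
    | zero =>
      have h1 := hf.step hT v p
      have h2 := hp (p + 1)
      simp only [Nat.cast_zero, add_zero]
      omega
    | succ n ih =>
      have h1 := hf.step hT v (p + n + 1)
      have h2 := hf.convex hT v (p + n)
      push_cast
      rw [show p + n + 1 + 1 = p + n + 2 by ring] at h1
      rw [show p + (n + 1) + 1 = p + n + 2 by ring, show p + ((n : ℤ) + 1) = p + n + 1 by ring]
      omega
  have hl : ∀ n : ℕ, T.dist v (f (p - n - 1)) = T.dist v (f (p - n)) + 1 := by
    intro n
    induction n with
    | zero =>
      have h1 := hf.step hT v (p - 1)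
      have h2 := hp (p - 1)
      rw [show p - 1 + 1 = p by ring] at h1
      simp only [Nat.cast_zero, sub_zero]
      omega
    | succ n ih =>
      have h1 := hf.step hT v (p - n - 2)
      have h2 := hf.convex hT v (p - n - 2)
      push_cast
      rw [show p - n - 2 + 1 = p - n - 1 by ring] at h1 h2
      rw [show p - n - 2 + 2 = p - n by ring] at h2
      rw [show p - (n + 1) - 1 = p - n - 2 by ring, show p - ((n : ℤ) + 1) = p - n - 1 by ring]
      omega
  have hr' : ∀ n : ℕ, T.dist v (f (p + n)) = T.dist v (f p) + n := by
    intro n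
    induction n with
    | zero => simp
    | succ n ih =>
      have := hr n
      push_cast
      rw [← add_assoc p, this, ih]; ring
  have hl' : ∀ n : ℕ, T.dist v (f (p - n)) = T.dist v (f p) + n := by
    intro n
    induction n with
    | zero => simp
    | succ n ih =>
      have := hl n
      push_cast
      rw [← sub_sub p, this, ih]; ring
  refine ⟨p, fun n => ?_⟩
  rcases le_total p n with h | h
  · have := hr' (n - p).toNat
    rw [Int.toNat_of_nonneg (by omega), show p + (n - p) = n by ring] at this
    rw [abs_of_nonneg (by omega), this]
    push_cast
    omega
  · have := hl' (p - n).toNat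
    rw [Int.toNat_of_nonneg (by omega), show p - (p - n) = n by ring] at this
    rw [abs_of_nonpos (by omega), this]
    push_cast
    omega

/-- `π` is a projection to the line `f`. -/
def IsProj (T : SimpleGraph V) (f : ℤ → V) (π : V → ℤ) : Prop :=
  ∀ v n, (T.dist v (f n) : ℤ) = T.dist v (f (π v)) + |n - π v|

lemma NBLine.exists_isProj (hT : T.IsTree) {f : ℤ → V} (hf : NBLine T f) :
    ∃ π, IsProj T f π := by
  choose π h using hf.exists_proj hT
  exact ⟨π, h⟩

lemma IsProj.unique {f : ℤ → V} {π : V → ℤ} (h : IsProj T f π) {v : V} {p : ℤ}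
    (hp : ∀ n, (T.dist v (f n) : ℤ) = T.dist v (f p) + |n - p|) : π v = p := by
  have h1 := h v p
  have h2 := hp (π v)
  have h3 : |p - π v| = |π v - p| := abs_sub_comm _ _
  have h4 : |π v - p| = 0 := by omega
  have := abs_eq_zero.1 h4
  omega

lemma IsProj.self {f : ℤ → V} {π : V → ℤ} (h : IsProj T f π) (m : ℤ) : π (f m) = m := by
  have h1 := h (f m) m
  rw [SimpleGraph.dist_self] at h1
  have h3 := abs_nonneg (m - π (f m))
  have h4 : |m - π (f m)| = 0 := by push_cast at h1; omega
  have := abs_eq_zero.1 h4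
  omega

lemma IsProj.dist_eq {f : ℤ → V} {π : V → ℤ} (h : IsProj T f π) (m n : ℤ) :
    (T.dist (f m) (f n) : ℤ) = |n - m| := by
  have := h (f m) n
  rw [h.self, SimpleGraph.dist_self] at this
  simpa using this

lemma IsProj.adj (hT : T.IsTree) {f : ℤ → V} {π : V → ℤ} (h : IsProj T f π) {u w : V}
    (huw : T.Adj u w) (hne : π u ≠ π w) : u = f (π u) := by
  have a1 := h u (π w)
  have a2 := h w (π u)
  have a3 : |π w - π u| = |π u - π w| := abs_sub_comm _ _
  have a4 : 0 < |π u - π w| := abs_pos.2 (by omega)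
  have b1 := hT.dist_eq_dist_add_one_of_adj (f (π u)) huw
  have b2 := hT.dist_eq_dist_add_one_of_adj (f (π w)) huw
  rw [SimpleGraph.dist_comm (v := u), SimpleGraph.dist_comm (v := w)] at b1 b2
  have hc : T.dist u (f (π u)) = T.dist w (f (π w)) := by omega
  have hd : |π u - π w| = 1 := by omega
  by_contra hcon
  have hpos : 0 < T.dist (f (π u)) u := hT.connected.pos_dist_of_ne (fun e => hcon e.symm)
  obtain ⟨x, hx, hxd⟩ := exists_closer hT hpos
  have c1 := h.dist_eq (π u) (π w)
  have c2 := hT.connected.dist_triangle (u := f (π w)) (v := f (π u)) (w := x)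
  have c3 := hT.dist_eq_dist_add_one_of_adj (f (π w)) hx
  have d1 := SimpleGraph.dist_comm (G := T) (u := f (π w)) (v := f (π u))
  have d2 := SimpleGraph.dist_comm (G := T) (u := f (π u)) (v := u)
  have d3 := SimpleGraph.dist_comm (G := T) (u := f (π w)) (v := u)
  have d4 := SimpleGraph.dist_comm (G := T) (u := f (π w)) (v := w)
  have d5 := SimpleGraph.dist_comm (G := T) (u := f (π u)) (v := w)
  have : w = x := tree_parent_unique hT (v := f (π w)) huw hx (by omega) (by omega)
  subst this
  omega

/-- If two points of `f'` have different projections, the projection lies on `f'`. -/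
lemma proj_mem (hT : T.IsTree) {f f' : ℤ → V} {π : V → ℤ} (h : IsProj T f π)
    (hf' : NBLine T f') {n n' : ℤ} (hne : π (f' n) ≠ π (f' n')) :
    ∃ s, f' s = f (π (f' n)) := by
  by_contra! hcon
  apply hne
  have hup : ∀ k : ℤ, π (f' k) = π (f' n) → π (f' (k + 1)) = π (f' n) := by
    intro k hk
    by_contra hc
    apply hcon k
    rw [← hk]
    exact h.adj hT (hf'.1 k) (by rw [hk]; exact fun e => hc e.symm)
  have hdn : ∀ k : ℤ, π (f' (k + 1)) = π (f' n) → π (f' k) = π (f' n) := by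
    intro k hk
    by_contra hc
    apply hcon (k + 1)
    rw [← hk]
    exact h.adj hT (hf'.1 k).symm (by rw [hk]; exact fun e => hc e.symm)
  have : π (f' n') = π (f' n) := by
    induction n' using Int.inductionOn' (b := n) with
    | zero => rfl
    | succ k _ ih => exact hup k (by by_contra hc; exact hc (ih (fun e => hc e.symm)))
    | pred k _ ih =>
      apply hdn (k - 1)
      rw [sub_add_cancel]
      by_contra hc; exact hc (ih (fun e => hc e.symm))
  exact this.symm

/-- Every vertex projects into the shadow of one of the lines on the other. -/
lemma proj_shadow (hT : T.IsTree) {f f' : ℤ → V} {π π' : V → ℤ} (h : IsProj T f π)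
    (h' : IsProj T f' π') (c : ℕ) : ∀ v, T.dist v (f' (π' v)) = c →
    (∃ n, π v = π (f' n)) ∨ (∃ n, π' v = π' (f n)) := by
  induction c with
  | zero =>
    intro v hv
    left
    exact ⟨π' v, by rw [← hT.connected.dist_eq_zero_iff.1 hv]⟩
  | succ c ih =>
    intro v hv
    obtain ⟨w, hw, hwd⟩ := exists_closer hT (v := f' (π' v)) (u := v) (by rw [SimpleGraph.dist_comm]; omega)
    have e : π' v = π' w := by
      by_contra hc
      rw [← h'.adj hT hw hc] at hv
      simp at hv
    have hwc : T.dist w (f' (π' w)) = c := by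
      rw [← e, SimpleGraph.dist_comm]
      rw [SimpleGraph.dist_comm] at hv
      omega
    by_cases hπ : π v = π w
    · rcases ih w hwc with ⟨n, hn⟩ | ⟨n, hn⟩
      · exact Or.inl ⟨n, hπ.trans hn⟩
      · exact Or.inr ⟨n, e.trans hn⟩
    · exact Or.inr ⟨π v, by rw [← h.adj hT hw hπ]⟩

/-- The shadow of `f'` on `f` has bounded size. -/
lemma shadow_bound (hT : T.IsTree) {f f' : ℤ → V} {π : V → ℤ} (h : IsProj T f π)
    (hf' : NBLine T f') (K : ℕ)
    (hK : ∀ m n, f m ∈ Set.range f' → f n ∈ Set.range f' → T.dist (f m) (f n) ≤ K) :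
    ∃ m : ℤ, ∀ n, m ≤ π (f' n) ∧ π (f' n) ≤ m + K := by
  have key : ∀ n n', |π (f' n') - π (f' n)| ≤ K := by
    intro n n'
    by_cases hne : π (f' n) = π (f' n')
    · rw [hne]; simp
    · have := hK _ _ (proj_mem hT h hf' hne) (proj_mem hT h hf' (Ne.symm hne))
      rw [← h.dist_eq]
      exact_mod_cast this
  obtain ⟨m, ⟨n0, hn0⟩, hm⟩ := Int.exists_least_of_bdd (P := fun m => ∃ n, π (f' n) = m)
    ⟨π (f' 0) - K, by
      rintro z ⟨n, rfl⟩
      have := abs_le.1 (key 0 n)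
      omega⟩ ⟨_, 0, rfl⟩
  refine ⟨m, fun n => ⟨hm _ ⟨n, rfl⟩, ?_⟩⟩
  have := abs_le.1 (key n0 n)
  omega

variable {G : Type*} [Group G] [MulAction G V]

lemma tdist_smul_le (hT : T.IsTree) (hAct : ActsByAut G T) (g : G) (u v : V) :
    T.dist (g • u) (g • v) ≤ T.dist u v := by
  obtain ⟨p, hp⟩ := hT.connected.exists_walk_length_eq_dist u v
  let φ : T →g T := ⟨fun x => g • x, fun {a b} hab => hAct g a b hab⟩
  have := dist_le (p.map φ)
  rw [Walk.length_map, hp] at this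
  exact this

lemma tdist_smul (hT : T.IsTree) (hAct : ActsByAut G T) (g : G) (u v : V) :
    T.dist (g • u) (g • v) = T.dist u v := by
  apply le_antisymm (tdist_smul_le hT hAct g u v)
  simpa using tdist_smul_le hT hAct g⁻¹ (g • u) (g • v)

/-- Geodesics as functions. -/
lemma exists_geod (hT : T.IsTree) (u v : V) : ∃ p : ℕ → V, p 0 = u ∧ p (T.dist u v) = v ∧
    (∀ i < T.dist u v, T.Adj (p i) (p (i + 1))) ∧
    ∀ i j, i ≤ j → j ≤ T.dist u v → T.dist (p i) (p j) = j - i := by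
  obtain ⟨w, hw⟩ := hT.connected.exists_walk_length_eq_dist u v
  have hadj : ∀ i < T.dist u v, T.Adj (w.getVert i) (w.getVert (i + 1)) := by
    intro i hi
    exact w.adj_getVert_succ (by omega)
  have h0 : w.getVert 0 = u := w.getVert_zero
  have h1 : w.getVert (T.dist u v) = v := by rw [← hw]; exact w.getVert_length
  have hle : ∀ i d, i + d ≤ T.dist u v → T.dist (w.getVert i) (w.getVert (i + d)) ≤ d := by
    intro i d
    induction d with
    | zero => simp
    | succ d ih =>
      intro hd
      have a := ih (by omega)
      have b := hT.connected.dist_triangle (u := w.getVert i) (v := w.getVert (i + d))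
        (w := w.getVert (i + (d + 1)))
      have c := dist_eq_one_iff_adj.2 (hadj (i + d) (by omega))
      rw [add_assoc] at c
      omega
  refine ⟨w.getVert, h0, h1, hadj, fun i j hij hj => ?_⟩
  have a := hle 0 i (by omega)
  have b := hle i (j - i) (by omega)
  have c := hle j (T.dist u v - j) (by omega)
  rw [show i + (j - i) = j by omega] at b
  rw [show j + (T.dist u v - j) = T.dist u v by omega, h1] at c
  rw [zero_add, h0] at a
  have d1 := hT.connected.dist_triangle (u := u) (v := w.getVert i) (w := v)
  have d2 := hT.connected.dist_triangle (u := w.getVert i) (v := w.getVert j) (w := v)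
  omega

lemma exists_axis (hT : T.IsTree) (hAct : ActsByAut G T) (hNoInv : NoEdgeInversion G T)
    (g : G) (hg : IsHyperbolic V g) :
    ∃ (f : ℤ → V) (t : ℕ), 0 < t ∧ NBLine T f ∧ (∀ n, g • f n = f (n + t)) ∧
      Set.range f ⊆ Axis T g := by
  have : Nonempty V := hT.connected.nonempty
  obtain ⟨v, hv⟩ : ∃ v, T.dist v (g • v) = transLen T g :=
    Nat.sInf_mem (Set.range_nonempty fun v => T.dist v (g • v))
  have hmin : ∀ u, transLen T g ≤ T.dist u (g • u) := fun u => Nat.sInf_le ⟨u, rfl⟩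
  have hpos : 0 < transLen T g := by
    rw [← hv]
    exact hT.connected.pos_dist_of_ne (fun e => hg ⟨v, e.symm⟩)
  obtain ⟨p, p0, p1, padj, pd⟩ := exists_geod hT v (g • v)
  rw [hv] at p1 padj pd
  generalize ht : transLen T g = t at *
  have htz : (0 : ℤ) < t := by exact_mod_cast hpos
  let f : ℤ → V := fun n => g ^ (n / (t : ℤ)) • p (n % (t : ℤ)).toNat
  have fval : ∀ (a : ℤ) (i : ℕ), i < t → f (a * t + i) = g ^ a • p i := by
    intro a i hi
    have e1 : (a * t + i) / (t : ℤ) = a := by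
      rw [add_comm, Int.add_mul_ediv_right _ _ htz.ne', Int.ediv_eq_zero_of_lt (by omega) (by omega)]
      simp
    have e2 : (a * t + i) % (t : ℤ) = i := by
      rw [add_comm, Int.add_mul_emod_self_right, Int.emod_eq_of_lt (by omega) (by omega)]
    simp only [f, e1, e2, Int.toNat_natCast]
  have fval' : ∀ (a : ℤ) (i : ℕ), i ≤ t → f (a * t + i) = g ^ a • p i := by
    intro a i hi
    rcases hi.lt_or_eq with hi | rfl
    · exact fval a i hi
    · have := fval (a + 1) 0 hpos
      rw [show a * (i : ℤ) + i = (a + 1) * i + (0 : ℕ) by push_cast; ring, this, p1, p0,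
        zpow_add_one, mul_smul]
  have decomp : ∀ n : ℤ, ∃ (a : ℤ) (i : ℕ), i < t ∧ n = a * t + i := by
    intro n
    refine ⟨n / t, (n % t).toNat, ?_, ?_⟩
    · have := Int.emod_lt_of_pos n htz
      omega
    · rw [Int.toNat_of_nonneg (Int.emod_nonneg _ htz.ne')]
      have := Int.mul_ediv_add_emod n t
      linarith
  have shift : ∀ n, g • f n = f (n + t) := by
    intro n
    obtain ⟨a, i, hi, rfl⟩ := decomp n
    rw [fval a i hi, show a * (t : ℤ) + i + t = (a + 1) * t + i by ring, fval _ i hi,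
      zpow_add, zpow_one, mul_smul, ← mul_smul, ← mul_smul, ← zpow_add_one, ← zpow_one_add,
      add_comm]
  have adj : ∀ n, T.Adj (f n) (f (n + 1)) := by
    intro n
    obtain ⟨a, i, hi, rfl⟩ := decomp n
    have := fval' a (i + 1) hi
    push_cast at this
    rw [add_assoc, this, fval a i hi]
    exact hAct _ _ _ (padj i hi)
  have nb : ∀ n, f n ≠ f (n + 2) := by
    intro n
    obtain ⟨a, i, hi, rfl⟩ := decomp n
    rcases Nat.lt_or_ge (i + 1) t with h | h
    · have := fval' a (i + 2) h
      push_cast at this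
      rw [add_assoc, this, fval a i hi]
      intro e
      have e' := smul_left_cancel _ e
      have := pd i (i + 2) (by omega) h
      rw [e', SimpleGraph.dist_self] at this
      omega
    · have hit : i + 1 = t := by omega
      have := fval' (a + 1) 1 hpos
      rw [show a * (t : ℤ) + i + 2 = (a + 1) * t + (1 : ℕ) by rw [← hit]; push_cast; ring, this,
        fval a i hi, zpow_add_one, mul_smul]
      intro e
      have e' := smul_left_cancel _ e
      rcases Nat.eq_zero_or_pos i with h0 | h0
      · subst h0
        have ht1 : t = 1 := by omega
        subst ht1
        refine hNoInv g (p 0) (p 1) (padj 0 hpos) ⟨?_, e'.symm⟩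
        rw [p1, p0]
      · have m := hmin (p 1)
        rw [← e', pd 1 i h0 (by omega)] at m
        omega
  refine ⟨f, t, hpos, ⟨adj, nb⟩, shift, ?_⟩
  rintro _ ⟨n, rfl⟩
  obtain ⟨π, hπ⟩ := NBLine.exists_isProj hT (f := f) ⟨adj, nb⟩
  have := hπ.dist_eq n (n + t)
  rw [← shift] at this
  simp only [Axis, Set.mem_ofPred_eq, ht]
  rw [show n + (t : ℤ) - n = t by ring, abs_of_pos htz] at this
  exact_mod_cast this

lemma shift_pow {g : G} {f : ℤ → V} {t : ℕ} (h : ∀ n, g • f n = f (n + t)) (q : ℕ) (n : ℤ) :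
    (g ^ q) • f n = f (n + (q * t : ℕ)) := by
  induction q generalizing n with
  | zero => simp
  | succ q ih =>
    rw [pow_succ, mul_smul, h, ih]
    congr 1
    push_cast
    ring

lemma IsProj.equivariant (hT : T.IsTree) (hAct : ActsByAut G T) {f : ℤ → V} {π : V → ℤ}
    (h : IsProj T f π) {a : G} {N : ℕ} (ha : ∀ n, a • f n = f (n + N)) (v : V) :
    π (a • v) = π v + N := by
  have key : ∀ n, T.dist (a • v) (f (n + N)) = T.dist v (f n) := by
    intro n
    rw [← ha, tdist_smul hT hAct]
  apply h.unique
  intro n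
  have h1 := key (n - N)
  rw [sub_add_cancel] at h1
  rw [h1, key, h v]
  congr 2
  ring

end Helpers

/-- Ping-pong for two elements, with sets described by integer-valued projections. -/
lemma pingpong_bool {G V : Type*} [Group G] [MulAction G V] (a b : G) (π π' : V → ℤ) (m m' : ℤ)
    (N N' : ℕ) (ha : ∀ v, π (a • v) = π v + N) (hb : ∀ v, π' (b • v) = π' v + N')
    (hsh : ∀ v, (m ≤ π v ∧ π v < m + N) ∨ (m' ≤ π' v ∧ π' v < m' + N'))
    (hne : ∃ v, m + N ≤ π v) (hne' : ∃ v, m' + N' ≤ π' v) :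
    FreelyGeneratesFreeSubgroup a b := by
  have ha' : ∀ v, π (a⁻¹ • v) = π v - N := by
    intro v
    have := ha (a⁻¹ • v)
    rw [smul_inv_smul] at this
    omega
  have hb' : ∀ v, π' (b⁻¹ • v) = π' v - N' := by
    intro v
    have := hb (b⁻¹ • v)
    rw [smul_inv_smul] at this
    omega
  let c : ULift Bool → G := fun i => if i.down then a else b
  let X : ULift Bool → Set V := fun i => if i.down then {v | m + N ≤ π v} else {v | m' + N' ≤ π' v}
  let Y : ULift Bool → Set V := fun i => if i.down then {v | π v < m} else {v | π' v < m'}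
  have main : Function.Injective (FreeGroup.lift c) := by
    apply FreeGroup.injective_lift_of_ping_pong c X Y
    · rintro ⟨_ | _⟩
      · simpa [X, Set.Nonempty] using hne'
      · simpa [X, Set.Nonempty] using hne
    · rintro ⟨_ | _⟩ ⟨_ | _⟩ hij <;> simp only [ne_eq, not_true_eq_false] at hij <;>
      · refine Set.disjoint_left.2 fun v hv hv' => ?_
        simp [X] at hv hv'
        have := hsh v
        omega
    · rintro ⟨_ | _⟩ ⟨_ | _⟩ hij <;> simp only [ne_eq, not_true_eq_false] at hij <;>
      · refine Set.disjoint_left.2 fun v hv hv' => ?_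
        simp [Y] at hv hv'
        have := hsh v
        omega
    · rintro ⟨_ | _⟩ ⟨_ | _⟩ <;>
      · refine Set.disjoint_left.2 fun v hv hv' => ?_
        simp [X, Y] at hv hv'
        have := hsh v
        omega
    · rintro ⟨_ | _⟩ _ ⟨v, hv, rfl⟩
      · simp [X, Y, c, hb] at hv ⊢
        omega
      · simp [X, Y, c, ha] at hv ⊢
        omega
    · rintro ⟨_ | _⟩ _ ⟨v, hv, rfl⟩
      · simp [X, Y, c, hb'] at hv ⊢
        omega
      · simp [X, Y, c, ha'] at hv ⊢
        omega
  have hcomp : (FreeGroup.lift (fun i : Bool => if i then a else b) : FreeGroup Bool →* G) =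
      (FreeGroup.lift c).comp (FreeGroup.freeGroupCongr Equiv.ulift.symm).toMonoidHom := by
    ext i
    simp [c]
  unfold FreelyGeneratesFreeSubgroup
  rw [hcomp, MonoidHom.coe_comp]
  exact main.comp (MulEquiv.injective _)

/-- If `G` acts `k`-acylindrically without edge inversions on a simplicial
tree, `h1, h2` are hyperbolic with distinct axes and the intersection of the axes has
diameter at most `3k`, then for every `q ≥ 3k + 1` the elements `h1^q` and `h2^q` freely
generate a rank 2 free subgroup of `G`. -/
theorem statement2 {G V : Type*} [Group G] [MulAction G V] (T : SimpleGraph V)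
    (hT : T.IsTree) (hAct : ActsByAut G T) (hNoInv : NoEdgeInversion G T)
    (k : ℕ) (hAcyl : AcylindricalAction T G k)
    (h1 h2 : G) (hh1 : IsHyperbolic V h1) (hh2 : IsHyperbolic V h2)
    (haxes : Axis T h1 ≠ Axis T h2)
    (hdiam : setDiam T (Axis T h1 ∩ Axis T h2) ≤ ((3 * k : ℕ) : ℕ∞))
    (q : ℕ) (hq : 3 * k + 1 ≤ q) :
    FreelyGeneratesFreeSubgroup (h1 ^ q) (h2 ^ q) := by
  obtain ⟨f, t, ht, hf, hs, hfA⟩ := exists_axis hT hAct hNoInv h1 hh1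
  obtain ⟨f', t', ht', hf', hs', hfA'⟩ := exists_axis hT hAct hNoInv h2 hh2
  obtain ⟨π, hπ⟩ := hf.exists_isProj hT
  obtain ⟨π', hπ'⟩ := hf'.exists_isProj hT
  have hD : ∀ u ∈ Axis T h1 ∩ Axis T h2, ∀ w ∈ Axis T h1 ∩ Axis T h2, T.dist u w ≤ 3 * k := by
    intro u hu w hw
    have hle : (T.dist u w : ℕ∞) ≤ setDiam T (Axis T h1 ∩ Axis T h2) :=
      le_iSup₂_of_le u hu (le_iSup₂_of_le w hw le_rfl)
    exact_mod_cast hle.trans hdiam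
  obtain ⟨m, hm⟩ := shadow_bound hT hπ hf' (3 * k) (fun i j hi hj =>
    hD _ ⟨hfA ⟨i, rfl⟩, by obtain ⟨s, e⟩ := hi; exact e ▸ hfA' ⟨s, rfl⟩⟩
      _ ⟨hfA ⟨j, rfl⟩, by obtain ⟨s, e⟩ := hj; exact e ▸ hfA' ⟨s, rfl⟩⟩)
  obtain ⟨m', hm'⟩ := shadow_bound hT hπ' hf (3 * k) (fun i j hi hj =>
    hD _ ⟨by obtain ⟨s, e⟩ := hi; exact e ▸ hfA ⟨s, rfl⟩, hfA' ⟨i, rfl⟩⟩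
      _ ⟨by obtain ⟨s, e⟩ := hj; exact e ▸ hfA ⟨s, rfl⟩, hfA' ⟨j, rfl⟩⟩)
  have hN : 3 * k + 1 ≤ q * t := hq.trans (Nat.le_mul_of_pos_right q ht)
  have hN' : 3 * k + 1 ≤ q * t' := hq.trans (Nat.le_mul_of_pos_right q ht')
  have eq1 := hπ.equivariant hT hAct (shift_pow hs q)
  have eq2 := hπ'.equivariant hT hAct (shift_pow hs' q)
  generalize q * t = N at hN eq1
  generalize q * t' = N' at hN' eq2
  have hshadow : ∀ v, (m ≤ π v ∧ π v < m + N) ∨ (m' ≤ π' v ∧ π' v < m' + N') := by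
    intro v
    rcases proj_shadow hT hπ hπ' _ v rfl with ⟨n, hn⟩ | ⟨n, hn⟩
    · left
      have := hm n
      push_cast at this
      omega
    · right
      have := hm' n
      push_cast at this
      omega
  exact pingpong_bool (h1 ^ q) (h2 ^ q) π π' m m' N N' eq1 eq2 hshadow
    ⟨f (m + N), by rw [hπ.self]⟩ ⟨f' (m' + N'), by rw [hπ'.self]⟩
end

section
/- Let G be a group acting k-acylindrically and without edge inversions on a simplicial tree T, where k is a nonnegative integer. Let h1, h2 ∈ G be hyperbolic elements with Axis(h1) ≠ Axis(h2), and suppose the intersection Axis(h1) ∩ Axis(h2) has finite diameter strictly greater than 3k. Then for every integer p ≥ 3, either the elements h1 and h2^p·h1·h2^{−p} freely generate a rank 2 free subgroup of G, or the elements h2 and h1^p·h2·h1^{−p} freely generate a rank 2 free subgroup of G. -/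
open SimpleGraph Pointwise

namespace TreeAux

section metric

variable {V : Type*} {T : SimpleGraph V}

lemma dist_ne (hT : T.IsTree) (z : V) {u v : V} (h : T.Adj u v) : T.dist z u ≠ T.dist z v := by
  obtain ⟨p, hp, hpl⟩ := hT.connected.exists_path_of_dist z u
  obtain ⟨q, hq, hql⟩ := hT.connected.exists_path_of_dist z v
  by_cases hu : u ∈ q.support
  · have := hT.isAcyclic.path_concat hp hq h hu
    have h2 := congrArg Walk.length this
    rw [Walk.length_concat] at h2
    omega
  · have h2 := (hT.isAcyclic.subsingleton_path z u).elim ⟨p, hp⟩ ⟨_, hq.concat hu h.symm⟩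
    have h3 := congrArg Walk.length (congrArg Subtype.val h2)
    simp only [Walk.length_concat] at h3
    omega

lemma dist_adj (hT : T.IsTree) (z : V) {u v : V} (h : T.Adj u v) :
    T.dist z u = T.dist z v + 1 ∨ T.dist z v = T.dist z u + 1 := by
  have h1 := dist_ne hT z h
  have h2 := hT.connected.dist_triangle (u := z) (v := u) (w := v)
  have h3 := hT.connected.dist_triangle (u := z) (v := v) (w := u)
  have h4 := dist_eq_one_iff_adj.mpr h
  have h5 := dist_eq_one_iff_adj.mpr h.symm
  omega

lemma closer_unique (hT : T.IsTree) (z : V) {u u' v : V} (h : T.Adj u v) (h' : T.Adj u' v)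
    (hd : T.dist z v = T.dist z u + 1) (hd' : T.dist z v = T.dist z u' + 1) : u = u' := by
  obtain ⟨p, hp, hpl⟩ := hT.connected.exists_path_of_dist z u
  obtain ⟨q, hq, hql⟩ := hT.connected.exists_path_of_dist z u'
  have a1 : (p.concat h).IsPath := Walk.isPath_of_length_eq_dist _ (by
    rw [Walk.length_concat]; omega)
  have a2 : (q.concat h').IsPath := Walk.isPath_of_length_eq_dist _ (by
    rw [Walk.length_concat]; omega)
  have h2 := congrArg Subtype.val ((hT.isAcyclic.subsingleton_path z v).elim ⟨_, a1⟩ ⟨_, a2⟩)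
  have h3 := congrArg Walk.penultimate h2
  simpa using h3

lemma ray (hT : T.IsTree) (z : V) (γ : ℕ → V) (n : ℕ) (hadj : ∀ m < n, T.Adj (γ m) (γ (m + 1)))
    (hne : ∀ m, m + 2 ≤ n → γ m ≠ γ (m + 2)) (h0 : 1 ≤ n → T.dist z (γ 0) ≤ T.dist z (γ 1)) :
    ∀ m ≤ n, T.dist z (γ m) = T.dist z (γ 0) + m := by
  intro m
  induction m using Nat.strong_induction_on with
  | _ m ih =>
    intro hm
    match m, ih, hm with
    | 0, _, _ => simp
    | 1, _, hm =>
      have := h0 hm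
      have := dist_adj hT z (hadj 0 (by omega))
      simp only [Nat.zero_add] at this
      omega
    | m + 2, ih, hm =>
      have e1 := ih m (by omega) (by omega)
      have e2 := ih (m + 1) (by omega) (by omega)
      have e3 := dist_adj hT z (hadj (m + 1) (by omega))
      have e4 := hadj m (by omega)
      have e5 := hadj (m + 1) (by omega)
      rcases e3 with e3 | e3
      · exact absurd (closer_unique hT z e4 e5.symm (by omega) (by exact e3)) (hne m hm)
      · rw [show m + 2 = m + 1 + 1 from rfl, e3]; omega

lemma geod (hT : T.IsTree) (x y : V) : ∃ γ : ℕ → V, γ 0 = x ∧ γ (T.dist x y) = y ∧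
    (∀ m < T.dist x y, T.Adj (γ m) (γ (m + 1))) ∧
    (∀ i j, i ≤ j → j ≤ T.dist x y → T.dist (γ i) (γ j) = j - i) := by
  obtain ⟨w, hw⟩ := hT.connected.exists_walk_length_eq_dist x y
  have hadj : ∀ m < T.dist x y, T.Adj (w.getVert m) (w.getVert (m + 1)) := by
    intro m hm
    exact w.adj_getVert_succ (by omega)
  have hle : ∀ i m, i + m ≤ T.dist x y → T.dist (w.getVert i) (w.getVert (i + m)) ≤ m := by
    intro i m
    induction m with
    | zero => intro _; simp
    | succ m ih =>
      intro h
      have h1 := ih (by omega)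
      have h2 := hT.connected.dist_triangle (u := w.getVert i) (v := w.getVert (i + m))
        (w := w.getVert (i + m + 1))
      have h3 := dist_eq_one_iff_adj.mpr (hadj (i + m) (by omega))
      rw [← Nat.add_assoc]
      omega
  have hx : w.getVert 0 = x := by simp
  have hy : w.getVert (T.dist x y) = y := by rw [← hw]; simp
  refine ⟨w.getVert, hx, hy, hadj, ?_⟩
  intro i j hij hj
  have h1 := hle i (j - i) (by omega)
  have h2 := hle 0 i (by omega)
  have h3 := hle j (T.dist x y - j) (by omega)
  rw [show i + (j - i) = j by omega] at h1
  rw [show j + (T.dist x y - j) = T.dist x y by omega, hy] at h3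
  rw [Nat.zero_add, hx] at h2
  have h4 := hT.connected.dist_triangle (u := x) (v := w.getVert i) (w := y)
  have h5 := hT.connected.dist_triangle (u := w.getVert i) (v := w.getVert j) (w := y)
  omega

lemma proj (hT : T.IsTree) (z : V) (γ : ℕ → V) (n : ℕ) (hadj : ∀ m < n, T.Adj (γ m) (γ (m + 1)))
    (hd : ∀ i j, i ≤ j → j ≤ n → T.dist (γ i) (γ j) = j - i) :
    ∃ i ≤ n, ∀ j ≤ n, T.dist z (γ j) = T.dist z (γ i) + (j - i) + (i - j) := by
  obtain ⟨i, hi, hmin⟩ := Finset.exists_min_image (Finset.range (n + 1))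
    (fun i => T.dist z (γ i)) ⟨0, by simp⟩
  simp only [Finset.mem_range] at hi hmin
  refine ⟨i, by omega, ?_⟩
  intro j hj
  rcases le_total i j with hij | hij
  · have := ray hT z (fun m => γ (i + m)) (n - i) (fun m hm => hadj (i + m) (by omega))
      (fun m hm he => by
        have := hd (i + m) (i + (m + 2)) (by omega) (by omega)
        rw [he] at this
        simp at this; omega)
      (fun h => hmin _ (by omega)) (j - i) (by omega)
    simp only [show i + (j - i) = j by omega] at this
    simp only [Nat.add_zero] at this
    omega
  · have := ray hT z (fun m => γ (i - m)) i (fun m hm => by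
        have := (hadj (i - (m + 1)) (by omega)).symm
        rwa [show i - (m + 1) + 1 = i - m by omega] at this)
      (fun m hm he => by
        have := hd (i - (m + 2)) (i - m) (by omega) (by omega)
        rw [he] at this
        simp at this; omega)
      (fun h => hmin _ (by omega)) (i - j) (by omega)
    simp only [show i - (i - j) = j by omega] at this
    simp only [Nat.sub_zero] at this
    omega

lemma parity (hT : T.IsTree) (x y z : V) : (T.dist x y + T.dist y z + T.dist x z) % 2 = 0 := by
  obtain ⟨γ, h0, h1, hadj, hd⟩ := geod hT x y
  obtain ⟨i, hi, h⟩ := proj hT z γ _ hadj hd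
  have e1 := h 0 (by omega)
  have e2 := h _ le_rfl
  rw [h0, dist_comm] at e1
  rw [h1, dist_comm] at e2
  omega

lemma four (hT : T.IsTree) (x y z w : V) :
    T.dist x y + T.dist z w ≤ T.dist x z + T.dist y w ∨
    T.dist x y + T.dist z w ≤ T.dist x w + T.dist y z := by
  obtain ⟨γ, h0, h1, hadj, hd⟩ := geod hT x y
  obtain ⟨i, hi, h⟩ := proj hT z γ _ hadj hd
  obtain ⟨j, hj, h'⟩ := proj hT w γ _ hadj hd
  have e1 := h 0 (by omega)
  have e2 := h _ le_rfl
  have e3 := h' 0 (by omega)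
  have e4 := h' _ le_rfl
  rw [h0, dist_comm] at e1 e3
  rw [h1, dist_comm] at e2 e4
  have t1 := hT.connected.dist_triangle (u := z) (v := γ i) (w := w)
  have t2 := hT.connected.dist_triangle (u := γ i) (v := γ j) (w := w)
  rw [dist_comm (u := γ j) (v := w)] at t2
  rcases le_total i j with hij | hij
  · have := hd i j hij hj
    omega
  · have := hd j i hij hi
    rw [dist_comm] at this
    omega

lemma concat (hT : T.IsTree) {u' u w w' : V} (hpos : 0 < T.dist u w)
    (h1 : T.dist u' w = T.dist u' u + T.dist u w) (h2 : T.dist u w' = T.dist u w + T.dist w w') :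
    T.dist u' w' = T.dist u' u + T.dist u w + T.dist w w' := by
  have := four hT u' w u w'
  have t1 := hT.connected.dist_triangle (u := u') (v := u) (w := w')
  rw [dist_comm (u := w) (v := u)] at this
  omega

lemma half_disj (hT : T.IsTree) {p' p q q' v : V} (h1 : T.dist p' p = 1) (h2 : T.dist q' q = 1)
    (h3 : T.dist p' q' = T.dist p q + 2) (hv : T.dist v p' < T.dist v p)
    (hv' : T.dist v q' < T.dist v q) : False := by
  have t1 := hT.connected.dist_triangle (u := p') (v := p) (w := q')
  have t2 := hT.connected.dist_triangle (u := p) (v := q) (w := q')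
  have t3 := hT.connected.dist_triangle (u := p') (v := q) (w := q')
  have t4 := hT.connected.dist_triangle (u := p') (v := p) (w := q)
  have f1 := four hT v p p' q'
  have f2 := four hT v q q' p'
  rw [dist_comm (u := q) (v := q')] at *
  rw [dist_comm (u := p) (v := p')] at *
  rw [dist_comm (u := q') (v := p')] at *
  rw [dist_comm (u := q) (v := p')] at *
  omega

/-- isometric line -/
def IsoLine (T : SimpleGraph V) (f : ℤ → V) : Prop := ∀ m n : ℤ, T.dist (f m) (f n) = (m - n).natAbs

lemma IsoLine.of_local (hT : T.IsTree) (f : ℤ → V) (h1 : ∀ n, T.Adj (f n) (f (n + 1)))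
    (h2 : ∀ n, f n ≠ f (n + 2)) : IsoLine T f := by
  have key : ∀ (n : ℤ) (m : ℕ), T.dist (f n) (f (n + m)) = m := by
    intro n m
    have := ray hT (f n) (fun i => f (n + i)) m (fun i _ => by
      have := h1 (n + i); push_cast; rwa [← add_assoc]) (fun i _ => by
      have := h2 (n + i); push_cast; rwa [← add_assoc]) (fun _ => by simp) m le_rfl
    simpa using this
  intro m n
  rcases le_total m n with h | h
  · have := key m (n - m).toNat
    rw [show m + ((n - m).toNat : ℤ) = n by omega] at this
    omega
  · have := key n (m - n).toNat
    rw [show n + ((m - n).toNat : ℤ) = m by omega, dist_comm] at this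
    omega

lemma IsoLine.rev {f : ℤ → V} (hf : IsoLine T f) (c : ℤ) : IsoLine T (fun n => f (c - n)) := by
  intro m n
  rw [hf]; omega

lemma IsoLine.shift {f : ℤ → V} (hf : IsoLine T f) (c : ℤ) : IsoLine T (fun n => f (c + n)) := by
  intro m n
  rw [hf]; omega

lemma IsoLine.proj (hT : T.IsTree) {f : ℤ → V} (hf : IsoLine T f) (v : V) :
    ∃ i, ∀ j, T.dist v (f j) = T.dist v (f i) + (j - i).natAbs := by
  obtain ⟨i, hi⟩ : ∃ i, ∀ j, T.dist v (f i) ≤ T.dist v (f j) := by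
    exact ⟨Function.argmin (fun j => T.dist v (f j)), fun j =>
      Function.argmin_le (fun j => T.dist v (f j)) j⟩
  refine ⟨i, fun j => ?_⟩
  have p := parity hT v (f i)
  rcases lt_trichotomy i j with h | rfl | h
  · have a := hi (i + 1)
    have b := p (f (i + 1))
    have c := four hT v (f (i + 1)) (f i) (f j)
    have t := hT.connected.dist_triangle (u := v) (v := f i) (w := f j)
    rw [hf] at b
    rw [hf, hf, hf] at c
    rw [hf] at t
    omega
  · simp
  · have a := hi (i - 1)
    have b := p (f (i - 1))
    have c := four hT v (f (i - 1)) (f i) (f j)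
    have t := hT.connected.dist_triangle (u := v) (v := f i) (w := f j)
    rw [hf] at b
    rw [hf, hf, hf] at c
    rw [hf] at t
    omega

lemma eq_of_between (hT : T.IsTree) {x y u u' : V} (h1 : T.dist x u + T.dist u y = T.dist x y)
    (h2 : T.dist x u' + T.dist u' y = T.dist x y) (h3 : T.dist x u = T.dist x u') : u = u' := by
  have := four hT x y u u'
  rw [dist_comm (u := y) (v := u), dist_comm (u := y) (v := u')] at this
  exact hT.connected.dist_eq_zero_iff.mp (by omega)

/-- branching lines -/
lemma branch (hT : T.IsTree) {f e : ℤ → V} (hf : IsoLine T f) (he : IsoLine T e) {D : ℤ}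
    (h0 : f D = e D) (hm : f (D - 1) = e (D - 1)) (hp : f (D + 1) ≠ e (D + 1)) {P : ℤ}
    (hP : D < P) (i : ℤ) : T.dist (f i) (e P) = (i - D).natAbs + (P - D).natAbs := by
  rcases lt_trichotomy i D with h | rfl | h
  · have := concat hT (u' := f i) (u := f (D - 1)) (w := f D) (w' := e P)
      (by rw [hf]; omega) (by rw [hf, hf, hf]; omega)
      (by rw [hf, h0, hm, he, he]; omega)
    rw [this, hf, hf, h0, he]; omega
  · rw [h0, he]; omega
  · have h2 : T.dist (f (D + 1)) (e (D + 1)) = 2 := by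
      have a := parity hT (f (D + 1)) (f D) (e (D + 1))
      have b := hT.connected.dist_triangle (u := f (D + 1)) (v := f D) (w := e (D + 1))
      have c := hT.connected.pos_dist_of_ne hp
      rw [hf, h0, he] at a b
      omega
    have h3 : T.dist (f D) (e (D + 1)) = 1 := by rw [h0, he]; omega
    have a := concat hT (u' := f i) (u := f (D + 1)) (w := f D) (w' := e (D + 1))
      (by rw [hf]; omega) (by rw [hf, hf, hf]; omega) (by rw [h2, h3, hf]; omega)
    rw [h3, hf, hf] at a
    have b := concat hT (u' := f i) (u := e D) (w := e (D + 1)) (w' := e P)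
      (by rw [he]; omega) (by rw [a, ← h0, hf, h0, he]; omega) (by rw [he, he, he]; omega)
    rw [b, ← h0, hf, h0, he, he]; omega

end metric

section action

universe u

variable {G V : Type*} [Group G] [MulAction G V] {T : SimpleGraph V}

lemma dist_smul_le (hT : T.IsTree) (hAct : ActsByAut G T) (g : G) (v w : V) :
    T.dist (g • v) (g • w) ≤ T.dist v w := by
  obtain ⟨p, hp⟩ := hT.connected.exists_walk_length_eq_dist v w
  rw [← hp]
  have := dist_le (p.map (⟨fun v => g • v, fun {a b} h => hAct g a b h⟩ : T →g T))
  simpa using this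

lemma dist_smul (hT : T.IsTree) (hAct : ActsByAut G T) (g : G) (v w : V) :
    T.dist (g • v) (g • w) = T.dist v w := by
  apply le_antisymm (dist_smul_le hT hAct g v w)
  simpa using dist_smul_le hT hAct g⁻¹ (g • v) (g • w)

lemma transLen_le (g : G) (v : V) : transLen T g ≤ T.dist v (g • v) :=
  ciInf_le (OrderBot.bddBelow _) v

lemma pow_smul_line {g : G} {f : ℤ → V} {s : ℤ} (h : ∀ n, g • f n = f (n + s)) (p : ℕ) (n : ℤ) :
    g ^ p • f n = f (n + p * s) := by
  induction p generalizing n with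
  | zero => simp
  | succ p ih =>
    rw [pow_succ, mul_smul, h, ih]; congr 1; push_cast; ring

lemma inv_smul_line {g : G} {f : ℤ → V} {s : ℤ} (h : ∀ n, g • f n = f (n + s)) (n : ℤ) :
    g⁻¹ • f n = f (n - s) := by
  rw [inv_smul_eq_iff, h]; congr 1; ring

lemma axis_line (hT : T.IsTree) (hAct : ActsByAut G T) (hNoInv : NoEdgeInversion G T)
    {g : G} (hg : IsHyperbolic V g) {x : V} (hx : x ∈ Axis T g) :
    1 ≤ transLen T g ∧ ∃ f : ℤ → V, IsoLine T f ∧ f 0 = x ∧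
      (∀ n, g • f n = f (n + transLen T g)) ∧ Axis T g = Set.range f := by
  have hx' : T.dist x (g • x) = transLen T g := hx
  have ht1 : 1 ≤ transLen T g := by
    by_contra h
    apply hg
    refine ⟨x, (hT.connected.dist_eq_zero_iff.mp ?_).symm⟩
    omega
  refine ⟨ht1, ?_⟩
  obtain ⟨γ, h0, h1, hadj, hd⟩ := geod hT x (g • x)
  rw [hx'] at h1 hadj hd
  have hle := transLen_le (T := T) g (V := V)
  have hax : ∀ v, v ∈ Axis T g ↔ T.dist v (g • v) = transLen T g := fun v => Iff.rfl
  generalize transLen T g = t at *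
  have hbt : g • γ 1 ≠ γ (t - 1) := by
    intro h
    by_cases ht : t = 1
    · subst ht
      refine hNoInv g (γ 0) (γ 1) (hadj 0 (by omega)) ⟨?_, h⟩
      rw [h0, h1]
    · have a := hle (γ 1)
      rw [h, hd _ _ (by omega) (by omega)] at a
      omega
  let f : ℤ → V := fun n => g ^ (n / t) • γ (n % t).toNat
  have ht0 : (0 : ℤ) < t := by omega
  have hfe : ∀ (q : ℤ) (r : ℕ), r < t → f (q * t + r) = g ^ q • γ r := by
    intro q r hr
    have e1 : (q * t + r) / (t : ℤ) = q := by
      rw [add_comm, Int.add_mul_ediv_right _ _ (by omega), Int.ediv_eq_zero_of_lt (by omega) (by omega)]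
      omega
    have e2 : (q * t + r) % (t : ℤ) = r := by
      rw [add_comm, Int.add_mul_emod_self_right, Int.emod_eq_of_lt (by omega) (by omega)]
    simp only [f, e1, e2, Int.toNat_natCast]
  have hfe' : ∀ (q : ℤ) (r : ℕ), r ≤ t → f (q * t + r) = g ^ q • γ r := by
    intro q r hr
    rcases hr.lt_or_eq with hr | rfl
    · exact hfe q r hr
    · have := hfe (q + 1) 0 (by omega)
      rw [h1, ← h0, smul_smul, ← zpow_add_one, ← this]
      congr 1; push_cast; ring
  have hdec : ∀ n : ℤ, ∃ (q : ℤ) (r : ℕ), r < t ∧ n = q * t + r := by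
    intro n
    refine ⟨n / t, (n % t).toNat, ?_, ?_⟩
    · have := Int.emod_lt_of_pos n ht0
      have := Int.emod_nonneg n ht0.ne'
      omega
    · have := Int.emod_nonneg n ht0.ne'
      have := Int.mul_ediv_add_emod n t
      rw [mul_comm] at this
      omega
  have hiso : IsoLine T f := by
    apply IsoLine.of_local hT
    · intro n
      obtain ⟨q, r, hr, rfl⟩ := hdec n
      have := hfe' q (r + 1) (by omega)
      push_cast at this
      rw [add_assoc, this, hfe' q r hr.le]
      exact hAct _ _ _ (hadj r hr)
    · intro n
      obtain ⟨q, r, hr, rfl⟩ := hdec n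
      rw [hfe' q r hr.le]
      by_cases hr2 : r + 2 ≤ t
      · have := hfe' q (r + 2) (by omega)
        push_cast at this
        rw [add_assoc, this]
        intro h
        have h := smul_left_cancel _ h
        have := hd r (r + 2) (by omega) hr2
        rw [← h] at this
        simp at this
      · have hr3 : t = r + 1 := by omega
        have := hfe' (q + 1) 1 (by omega)
        rw [show q * t + r + 2 = (q + 1) * t + (1 : ℕ) by rw [hr3]; push_cast; ring, this,
          zpow_add_one, mul_smul]
        intro h
        have h := smul_left_cancel _ h
        apply hbt
        rw [← h]; congr 1; omega
  have heq : ∀ n, g • f n = f (n + t) := by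
    intro n
    obtain ⟨q, r, hr, rfl⟩ := hdec n
    have := hfe' (q + 1) r hr.le
    rw [show q * t + r + t = (q + 1) * t + r by ring, this, hfe' q r hr.le, smul_smul,
      ← zpow_one_add, add_comm]
  refine ⟨f, hiso, ?_, heq, ?_⟩
  · have := hfe' 0 0 (by omega)
    simpa [h0] using this
  · ext v
    rw [hax]
    constructor
    · intro hv
      obtain ⟨i, hi⟩ := hiso.proj hT v
      have e1 : T.dist (f (i + t)) (g • v) = T.dist v (f i) := by
        rw [← heq, dist_smul hT hAct, dist_comm]
      have e2 : T.dist (f i) (g • v) = T.dist v (f i) + t := by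
        have : g • f (i - t) = f i := by rw [heq]; congr 1; ring
        rw [← congrArg (fun z => T.dist z (g • v)) this]
        rw [dist_smul hT hAct, dist_comm, hi]; omega
      have := concat hT (u' := v) (u := f i) (w := f (i + t)) (w' := g • v)
        (by rw [hiso]; omega) (by rw [hi, hiso]; omega) (by rw [e1, e2, hiso]; omega)
      rw [hv, e1, hiso] at this
      exact ⟨i, (hT.connected.dist_eq_zero_iff.mp (by omega)).symm⟩
    · rintro ⟨n, rfl⟩
      rw [heq, hiso]; omega

lemma axis_line' (hT : T.IsTree) (hAct : ActsByAut G T) (hNoInv : NoEdgeInversion G T)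
    {g : G} (hg : IsHyperbolic V g) {x y : V} (hx : x ∈ Axis T g) (hy : y ∈ Axis T g) :
    ∃ (f : ℤ → V) (s : ℤ), 1 ≤ transLen T g ∧ s.natAbs = transLen T g ∧ IsoLine T f ∧ f 0 = x ∧
      f (T.dist x y) = y ∧ (∀ n, g • f n = f (n + s)) ∧ Axis T g = Set.range f := by
  obtain ⟨ht, f, hf, h0, hg, hr⟩ := axis_line hT hAct hNoInv hg hx
  obtain ⟨m, rfl⟩ : y ∈ Set.range f := hr ▸ hy
  subst h0
  have hd := hf 0 m
  rcases le_total 0 m with h | h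
  · refine ⟨f, transLen T g, ht, by omega, hf, rfl, ?_, hg, hr⟩
    congr 1; omega
  · refine ⟨fun n => f (0 - n), -transLen T g, ht, by omega, hf.rev 0, by simp, ?_, ?_, ?_⟩
    · simp only; congr 1; omega
    · intro n
      simp only [hg]; congr 1; ring
    · rw [hr]
      ext v
      constructor
      · rintro ⟨n, rfl⟩; exact ⟨-n, by simp⟩
      · rintro ⟨n, rfl⟩; exact ⟨0 - n, rfl⟩

lemma ping {G : Type u} {V : Type*} [Group G] [MulAction G V] {T : SimpleGraph V} (hT : T.IsTree) (hAct : ActsByAut G T) {f g : ℤ → V} (hf : IsoLine T f)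
    (hg : IsoLine T g) {L : ℕ} (hL : ∀ i j, T.dist (f i) (g j) = i.natAbs + L + j.natAbs)
    {a b : G} {s t : ℤ} (hs : 1 ≤ s) (ht : 1 ≤ t) (ha : ∀ n, a • f n = f (n + s))
    (hb : ∀ n, b • g n = g (n + t)) : FreelyGeneratesFreeSubgroup a b := by
  unfold FreelyGeneratesFreeSubgroup
  have hL' : ∀ i j, T.dist (g j) (f i) = i.natAbs + L + j.natAbs := fun i j => by
    rw [dist_comm, hL]
  have hXX : ∀ (c : G) (k : ℤ → V) (r : ℤ), IsoLine T k → (∀ n, c • k n = k (n + r)) → ∀ v,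
      ¬ (T.dist v (k (-1)) < T.dist v (k 0)) →
      T.dist (c • v) (k r) < T.dist (c • v) (k (r - 1)) := by
    intro c k r hk hc v hv
    have e1 : c • k 0 = k r := by rw [hc]; simp
    have e2 : c • k (-1) = k (r - 1) := by rw [hc]; congr 1; ring
    rw [← e1, ← e2, dist_smul hT hAct, dist_smul hT hAct]
    have := parity hT v (k (-1)) (k 0)
    rw [hk] at this
    omega
  have hYY : ∀ (c : G) (k : ℤ → V) (r : ℤ), IsoLine T k → (∀ n, c • k n = k (n + r)) → ∀ v,
      ¬ (T.dist v (k r) < T.dist v (k (r - 1))) →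
      T.dist (c⁻¹ • v) (k (-1)) < T.dist (c⁻¹ • v) (k 0) := by
    intro c k r hk hc v hv
    by_contra h
    have := hXX c k r hk hc _ h
    rw [smul_inv_smul] at this
    exact hv this
  have hcomp : (FreeGroup.lift (fun i : Bool => if i then a else b) : FreeGroup Bool →* G) =
      (FreeGroup.lift (fun i : ULift.{u} Bool => if i.down then a else b)).comp
        (FreeGroup.freeGroupCongr Equiv.ulift.{u}.symm).toMonoidHom := by
    ext i
    simp
  rw [hcomp, MonoidHom.coe_comp]
  refine Function.Injective.comp ?_ (FreeGroup.freeGroupCongr Equiv.ulift.{u}.symm).injective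
  apply FreeGroup.injective_lift_of_ping_pong (α := V)
    (fun i : ULift.{u} Bool => if i.down then a else b)
    (fun i => if i.down then {v | T.dist v (f s) < T.dist v (f (s - 1))}
      else {v | T.dist v (g t) < T.dist v (g (t - 1))})
    (fun i => if i.down then {v | T.dist v (f (-1)) < T.dist v (f 0)}
      else {v | T.dist v (g (-1)) < T.dist v (g 0)})
  · rintro ⟨_ | _⟩
    · exact ⟨g t, by simp only [Bool.false_eq_true, if_false, Set.mem_ofPred_eq]; rw [hg, hg]; omega⟩
    · exact ⟨f s, by simp only [if_true, Set.mem_ofPred_eq]; rw [hf, hf]; omega⟩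
  · rintro ⟨_ | _⟩ ⟨_ | _⟩ h
    · exact absurd rfl h
    · refine Set.disjoint_left.mpr fun v h1 h2 => ?_
      simp only [Bool.false_eq_true, if_false, if_true, Set.mem_ofPred_eq] at h1 h2
      exact half_disj hT (by rw [hg]; omega) (by rw [hf]; omega) (by rw [hL', hL']; omega) h1 h2
    · refine Set.disjoint_left.mpr fun v h1 h2 => ?_
      simp only [Bool.false_eq_true, if_false, if_true, Set.mem_ofPred_eq] at h1 h2
      exact half_disj hT (by rw [hf]; omega) (by rw [hg]; omega) (by rw [hL, hL]; omega) h1 h2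
    · exact absurd rfl h
  · rintro ⟨_ | _⟩ ⟨_ | _⟩ h
    · exact absurd rfl h
    · refine Set.disjoint_left.mpr fun v h1 h2 => ?_
      simp only [Bool.false_eq_true, if_false, if_true, Set.mem_ofPred_eq] at h1 h2
      exact half_disj hT (by rw [hg]; omega) (by rw [hf]; omega) (by rw [hL', hL']; omega) h1 h2
    · refine Set.disjoint_left.mpr fun v h1 h2 => ?_
      simp only [Bool.false_eq_true, if_false, if_true, Set.mem_ofPred_eq] at h1 h2
      exact half_disj hT (by rw [hf]; omega) (by rw [hg]; omega) (by rw [hL, hL]; omega) h1 h2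
    · exact absurd rfl h
  · rintro ⟨_ | _⟩ ⟨_ | _⟩ <;> refine Set.disjoint_left.mpr fun v h1 h2 => ?_ <;>
      simp only [Bool.false_eq_true, if_false, if_true, Set.mem_ofPred_eq] at h1 h2
    · exact half_disj hT (by rw [hg]; omega) (by rw [hg]; omega) (by rw [hg, hg]; omega) h1 h2
    · exact half_disj hT (by rw [hg]; omega) (by rw [hf]; omega) (by rw [hL', hL']; omega) h1 h2
    · exact half_disj hT (by rw [hf]; omega) (by rw [hg]; omega) (by rw [hL, hL]; omega) h1 h2
    · exact half_disj hT (by rw [hf]; omega) (by rw [hf]; omega) (by rw [hf, hf]; omega) h1 h2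
  · rintro ⟨_ | _⟩ _ ⟨v, hv, rfl⟩
    · exact hXX b g t hg hb v hv
    · exact hXX a f s hf ha v hv
  · rintro ⟨_ | _⟩ _ ⟨v, hv, rfl⟩
    · exact hYY b g t hg hb v hv
    · exact hYY a f s hf ha v hv

lemma free_core (hT : T.IsTree) (hAct : ActsByAut G T) {f e : ℤ → V} (hf : IsoLine T f)
    (he : IsoLine T e) {D : ℤ} (hD : 1 ≤ D) (hag : ∀ i, 0 ≤ i → i ≤ D → f i = e i)
    (hp : f (D + 1) ≠ e (D + 1)) (hm : f (-1) ≠ e (-1)) {a c : G} {s P : ℤ} (hs : s ≠ 0)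
    (hP : D < P) (ha : ∀ n, a • f n = f (n + s)) (hc : ∀ n, c • e n = e (n + P)) :
    FreelyGeneratesFreeSubgroup a (c * a * c⁻¹) := by
  have d1 : ∀ i, T.dist (f i) (e P) = (i - D).natAbs + (P - D).natAbs :=
    branch hT hf he (hag _ (by omega) le_rfl) (hag _ (by omega) (by omega)) hp hP
  have d2 : ∀ j, T.dist (e D) (c • f j) = j.natAbs + (P - D).natAbs := by
    intro j
    have e1 : e D = c • e (D - P) := by rw [hc]; congr 1; ring
    rw [e1, dist_smul hT hAct, dist_comm]
    have := branch hT (hf.rev D) (he.rev D) (D := D)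
      (by simpa using hag 0 le_rfl (by omega))
      (by simpa using hag 1 (by omega) hD) (by simpa using hm) hP (D - j)
    simp only [sub_sub_cancel] at this
    rw [this]; omega
  have hcf : ∀ i j, T.dist (c • f i) (c • f j) = (i - j).natAbs := fun i j => by
    rw [dist_smul hT hAct, hf]
  have hfD := hag D (by omega) le_rfl
  have hf0 : e P = c • f 0 := by rw [hag 0 le_rfl (by omega), hc]; congr 1; ring
  have d3 : ∀ i j, T.dist (f i) (c • f j) = (i - D).natAbs + (P - D).natAbs + j.natAbs := by
    intro i j
    have := concat hT (u' := f i) (u := e D) (w := e P) (w' := c • f j)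
      (by rw [he]; omega) (by rw [d1, ← hfD, hf, hfD, he]; omega)
      (by rw [d2, he, hf0, hcf]; omega)
    rw [this, ← hfD, hf, hfD, he, hf0, hcf]; omega
  have hb : ∀ n, (c * a * c⁻¹) • c • f n = c • f (n + s) := by
    intro n
    rw [← ha]; simp [mul_smul]
  rcases lt_or_gt_of_ne hs with h | h
  · refine ping hT hAct (f := fun n => f (D - n)) (g := fun n => c • f (0 - n)) (s := -s) (t := -s)
      (hf.rev D) (fun m n => by rw [hcf]; omega) (L := (P - D).natAbs)
      (fun i j => by rw [d3]; omega) (by omega) (by omega) ?_ ?_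
    · intro n; simp only [ha]; congr 1; ring
    · intro n; simp only [hb]; congr 2; ring
  · refine ping hT hAct (f := fun n => f (D + n)) (g := fun n => c • f n) (s := s) (t := s)
      (hf.shift D) (fun m n => by rw [hcf]) (L := (P - D).natAbs)
      (fun i j => by rw [d3]; omega) (by omega) (by omega) ?_ ?_
    · intro n; simp only [ha]; congr 1; ring
    · intro n; simp only [hb]

lemma free_core' (hT : T.IsTree) (hAct : ActsByAut G T) {f e : ℤ → V} (hf : IsoLine T f)
    (he : IsoLine T e) {D : ℤ} (hD : 1 ≤ D) (hag : ∀ i, 0 ≤ i → i ≤ D → f i = e i)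
    (hp : f (D + 1) ≠ e (D + 1)) (hm : f (-1) ≠ e (-1)) {a c : G} {s P : ℤ} (hs : s ≠ 0)
    (hP : D < P.natAbs) (ha : ∀ n, a • f n = f (n + s)) (hc : ∀ n, c • e n = e (n + P)) :
    FreelyGeneratesFreeSubgroup a (c * a * c⁻¹) := by
  rcases le_total 0 P with h | h
  · exact free_core hT hAct hf he hD hag hp hm hs (by omega) ha hc
  · refine free_core hT hAct (hf.rev D) (he.rev D) (s := -s) (P := -P) hD
      (fun i h1 h2 => hag _ (by omega) (by omega)) (by simpa using hm) (by simpa using hp)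
      (by omega) (by omega) ?_ ?_
    · intro n; simp only [ha]; congr 1; ring
    · intro n; simp only [hc]; congr 1; ring

lemma comm_core {k : ℕ} (hAcyl : AcylindricalAction T G k)
    {f e : ℤ → V} (hf : IsoLine T f)
    {D : ℤ} (hag : ∀ i, 0 ≤ i → i ≤ D → f i = e i)
    {a b : G} {s t : ℤ} (hs : 0 ≤ s) (ht : 0 ≤ t) (hD : s + t + k < D)
    (ha : ∀ n, a • f n = f (n + s)) (hb : ∀ n, b • e n = e (n + t)) : Commute a b := by
  have key : ∀ i, 0 ≤ i → i + s + t ≤ D → ((b * a)⁻¹ * (a * b)) • f i = f i := by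
    intro i h1 h2
    rw [mul_smul, inv_smul_eq_iff, mul_smul, mul_smul, ha, hag i h1 (by omega), hb,
      ← hag _ (by omega) (by omega), ha, hag (i + s) (by omega) (by omega), hb,
      ← hag _ (by omega) (by omega)]
    congr 1; ring
  by_contra hne
  have h1 : (b * a)⁻¹ * (a * b) ≠ 1 := by
    intro h
    exact hne (inv_mul_eq_one.mp h).symm
  have k0 := key 0 le_rfl (by omega)
  have k1 := key (k + 1) (by omega) (by omega)
  have h2 := hAcyl _ h1 ⟨_, k0⟩
  have h3 : (T.dist (f 0) (f (k + 1)) : ℕ∞) ≤ k := by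
    refine le_trans ?_ h2
    unfold setDiam
    exact le_trans (le_iSup₂ (f := fun w (_ : w ∈ Fixed V ((b * a)⁻¹ * (a * b))) =>
      (T.dist (f 0) w : ℕ∞)) _ k1) (le_iSup₂ (f := fun v (_ : v ∈ Fixed V ((b * a)⁻¹ * (a * b))) =>
        ⨆ w ∈ Fixed V ((b * a)⁻¹ * (a * b)), (T.dist v w : ℕ∞)) _ k0)
  rw [hf, Nat.cast_le] at h3
  omega

lemma comm_core' {k : ℕ} (hAcyl : AcylindricalAction T G k)
    {f e : ℤ → V} (hf : IsoLine T f)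
    {D : ℤ} (hag : ∀ i, 0 ≤ i → i ≤ D → f i = e i)
    {a b : G} {s t : ℤ} (hD : s.natAbs + t.natAbs + k < D)
    (ha : ∀ n, a • f n = f (n + s)) (hb : ∀ n, b • e n = e (n + t)) : Commute a b := by
  rcases le_total 0 s with hs | hs <;> rcases le_total 0 t with ht | ht
  · exact comm_core hAcyl hf hag hs ht (by omega) ha hb
  · exact Commute.inv_right_iff.mp (comm_core hAcyl hf hag hs (t := -t) (by omega) (by omega)
      ha (inv_smul_line hb))
  · exact Commute.inv_left_iff.mp (comm_core hAcyl hf hag (s := -s) (by omega) ht (by omega)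
      (inv_smul_line ha) hb)
  · exact Commute.inv_inv_iff.mp (comm_core hAcyl hf hag (s := -s) (t := -t) (by omega)
      (by omega) (by omega) (inv_smul_line ha) (inv_smul_line hb))

end action

end TreeAux
/-- If `G` acts `k`-acylindrically without edge inversions on a simplicial
tree, `h1, h2` are hyperbolic with distinct axes and the intersection of the axes has
finite diameter strictly greater than `3k`, then for every integer `p ≥ 3` either `h1` and
`h2^p * h1 * h2^(-p)`, or `h2` and `h1^p * h2 * h1^(-p)`, freely generate a rank 2 free
subgroup of `G`. -/
theorem statement3 {G V : Type*} [Group G] [MulAction G V] (T : SimpleGraph V)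
    (hT : T.IsTree) (hAct : ActsByAut G T) (hNoInv : NoEdgeInversion G T)
    (k : ℕ) (hAcyl : AcylindricalAction T G k)
    (h1 h2 : G) (hh1 : IsHyperbolic V h1) (hh2 : IsHyperbolic V h2)
    (haxes : Axis T h1 ≠ Axis T h2)
    (hfin : setDiam T (Axis T h1 ∩ Axis T h2) ≠ ⊤)
    (hbig : ((3 * k : ℕ) : ℕ∞) < setDiam T (Axis T h1 ∩ Axis T h2))
    (p : ℕ) (hp : 3 ≤ p) :
    FreelyGeneratesFreeSubgroup h1 (h2 ^ p * h1 * (h2 ^ p)⁻¹) ∨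
      FreelyGeneratesFreeSubgroup h2 (h1 ^ p * h2 * (h1 ^ p)⁻¹) := by
  set S := Axis T h1 ∩ Axis T h2 with hS
  have hub : ∀ v ∈ S, ∀ w ∈ S, (T.dist v w : ℕ∞) ≤ setDiam T S := by
    intro v hv w hw
    exact le_trans (le_iSup₂ (f := fun w (_ : w ∈ S) => (T.dist v w : ℕ∞)) _ hw)
      (le_iSup₂ (f := fun v (_ : v ∈ S) => ⨆ w ∈ S, (T.dist v w : ℕ∞)) _ hv)
  obtain ⟨N, hN⟩ := ENat.ne_top_iff_exists.mp hfin
  have hub' : ∀ v ∈ S, ∀ w ∈ S, T.dist v w ≤ N := by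
    intro v hv w hw
    have := hub v hv w hw
    rw [← hN] at this
    exact_mod_cast this
  rw [← hN, Nat.cast_lt] at hbig
  -- the diameter is attained
  obtain ⟨x, hx, y, hy, hxy⟩ : ∃ x ∈ S, ∃ y ∈ S, T.dist x y = N := by
    by_contra! hcon
    have : setDiam T S ≤ ((N - 1 : ℕ) : ℕ∞) := by
      refine iSup₂_le fun v hv => iSup₂_le fun w hw => ?_
      have a := hub' v hv w hw
      have b := hcon v hv w hw
      rw [Nat.cast_le]; omega
    rw [← hN, Nat.cast_le] at this
    omega
  obtain ⟨f, s, ht1, hs, hf, f0, fD, hfg, hfr⟩ :=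
    TreeAux.axis_line' hT hAct hNoInv hh1 hx.1 hy.1
  obtain ⟨e, t, ht2, ht, he, e0, eD, heg, her⟩ :=
    TreeAux.axis_line' hT hAct hNoInv hh2 hx.2 hy.2
  rw [hxy] at fD eD
  have hag : ∀ i : ℤ, 0 ≤ i → i ≤ N → f i = e i := by
    intro i h0 h1
    apply TreeAux.eq_of_between hT (x := x) (y := y)
    · rw [hxy, ← f0, ← fD, hf, hf]; omega
    · rw [hxy, ← e0, ← eD, he, he]; omega
    · nth_rw 1 [← f0]
      rw [← e0, hf, he]
  have hmem : ∀ i j : ℤ, f i = e j → f i ∈ S := fun i j h =>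
    ⟨hfr ▸ ⟨i, rfl⟩, her ▸ ⟨j, h.symm⟩⟩
  have hp1 : f (N + 1) ≠ e (N + 1) := by
    intro h
    have := hub' _ hx _ (hmem _ _ h)
    rw [← f0, hf] at this
    omega
  have hm1 : f (-1) ≠ e (-1) := by
    intro h
    have := hub' _ hy _ (hmem _ _ h)
    rw [← fD, hf] at this
    omega
  have hbound : N ≤ transLen T h1 + transLen T h2 + k := by
    by_contra hcon
    have hc : Commute h1 h2 := TreeAux.comm_core' hAcyl hf hag (by omega) hfg heg
    have hc' : Commute h1 (h2 ^ (N + 1)) := hc.pow_right _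
    have hpw := TreeAux.pow_smul_line heg (N + 1) 0
    have hmemS : h2 ^ (N + 1) • e 0 ∈ S := by
      constructor
      · have : x ∈ Axis T h1 := hx.1
        change T.dist _ _ = _ at this
        change T.dist _ _ = _
        rw [smul_smul, hc'.eq, mul_smul, TreeAux.dist_smul hT hAct, e0, this]
      · rw [hpw, her]; exact ⟨_, rfl⟩
    have := hub' _ hx _ hmemS
    rw [hpw, ← e0, he] at this
    have h5 : (0 - (0 + ((N + 1 : ℕ) : ℤ) * t)).natAbs = (N + 1) * t.natAbs := by
      rw [zero_add, zero_sub, Int.natAbs_neg, Int.natAbs_mul, Int.natAbs_natCast]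
    rw [h5, ht] at this
    nlinarith
  rcases le_total (transLen T h1) (transLen T h2) with hle | hle
  · left
    refine TreeAux.free_core' hT hAct hf he (D := N) (by omega) hag hp1 hm1 (s := s)
      (P := p * t) (by omega) ?_ hfg (TreeAux.pow_smul_line heg p)
    rw [Int.natAbs_mul, Int.natAbs_natCast, ht]
    have : 3 * transLen T h2 ≤ p * transLen T h2 := Nat.mul_le_mul_right _ hp
    omega
  · right
    refine TreeAux.free_core' hT hAct he hf (D := N) (by omega)
      (fun i h h' => (hag i h h').symm) hp1.symm hm1.symm (s := t)
      (P := p * s) (by omega) ?_ heg (TreeAux.pow_smul_line hfg p)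
    rw [Int.natAbs_mul, Int.natAbs_natCast, hs]
    have : 3 * transLen T h1 ≤ p * transLen T h1 := Nat.mul_le_mul_right _ hp
    omega
end

section
/- Let G be a group acting without edge inversions on a simplicial tree T, and let g1, g2 ∈ G be elliptic elements with Fix(g1) ∩ Fix(g2) = ∅. Then the product g1·g2 is hyperbolic and its translation length is τ(g1·g2) = 2·d(Fix(g1), Fix(g2)), where d(A,B) denotes the minimal simplicial distance between a vertex of A and a vertex of B. -/
open SimpleGraph Pointwise

/-- In a tree, locally geodesic implies geodesic. -/
theorem tree_path_length {V : Type*} {T : SimpleGraph V} (hT : T.IsTree) {u v : V}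
    (p : T.Walk u v) (hp : p.IsPath) : p.length = T.dist u v := by
  obtain ⟨q, hq, hl⟩ := hT.connected.exists_path_of_dist u v
  rw [← hl, (hT.existsUnique_path u v).unique hp hq]

theorem tree_concat {V : Type*} {T : SimpleGraph V} (hT : T.IsTree) {x y z w : V}
    (hyz : y ≠ z) (h1 : T.dist x z = T.dist x y + T.dist y z)
    (h2 : T.dist y w = T.dist y z + T.dist z w) :
    T.dist x w = T.dist x y + T.dist y z + T.dist z w := by
  obtain ⟨p, hp⟩ := hT.connected.exists_walk_length_eq_dist x y
  obtain ⟨q, hq⟩ := hT.connected.exists_walk_length_eq_dist y z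
  obtain ⟨r, hr⟩ := hT.connected.exists_walk_length_eq_dist z w
  have hpq : (p.append q).IsPath :=
    Walk.isPath_of_length_eq_dist _ (by rw [Walk.length_append]; omega)
  have hqr : (q.append r).IsPath :=
    Walk.isPath_of_length_eq_dist _ (by rw [Walk.length_append]; omega)
  have hne : q.edges ≠ [] := by
    intro h
    have : q.edges.length = 0 := by rw [h]; rfl
    rw [Walk.length_edges] at this
    exact hyz (Walk.eq_of_length_eq_zero this)
  have hpqr : ((p.append q).append r).IsPath := by
    rw [hT.isAcyclic.isPath_iff_isChain] at hpq hqr ⊢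
    rw [Walk.edges_append] at hpq hqr
    rw [Walk.edges_append, Walk.edges_append]
    exact hpq.append_overlap hqr hne
  rw [← tree_path_length hT _ hpqr, Walk.length_append, Walk.length_append]
  omega

theorem tree_branch {V : Type*} {T : SimpleGraph V} (hT : T.IsTree) {p q q' c c' : V}
    (hc : T.Adj p c) (hc' : T.Adj p c') (hne : c ≠ c')
    (h : T.dist p q = T.dist c q + 1) (h' : T.dist p q' = T.dist c' q' + 1) :
    T.dist q q' = T.dist p q + T.dist p q' := by
  have e1 : T.dist p c = 1 := dist_eq_one_iff_adj.2 hc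
  have e2 : T.dist p c' = 1 := dist_eq_one_iff_adj.2 hc'
  have e3 : T.dist c c' = 2 := by
    have t := hT.connected.dist_triangle (u := c) (v := p) (w := c')
    rw [SimpleGraph.dist_comm (u := c) (v := p)] at t
    have n0 := hT.connected.pos_dist_of_ne hne
    have n1 : T.dist c c' ≠ 1 := fun hh =>
      hT.dist_ne_of_adj p (dist_eq_one_iff_adj.1 hh) (e1.trans e2.symm)
    omega
  have e1' : T.dist c p = 1 := by rw [SimpleGraph.dist_comm, e1]
  have h0 : T.dist q p = T.dist q c + 1 := by rw [SimpleGraph.dist_comm, h, SimpleGraph.dist_comm]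
  have s1 := tree_concat hT (x := q) (y := c) (z := p) (w := c') hc.ne.symm
    (by omega) (by omega)
  have s2 := tree_concat hT (x := q) (y := p) (z := c') (w := q') hc'.ne
    (by omega) (by omega)
  rw [s2, SimpleGraph.dist_comm (u := p) (v := q)]
  omega

theorem act_dist_le {G V : Type*} [Group G] [MulAction G V] {T : SimpleGraph V}
    (hT : T.IsTree) (hAct : ActsByAut G T) (g : G) (v w : V) :
    T.dist (g • v) (g • w) ≤ T.dist v w := by
  obtain ⟨p, hp⟩ := hT.connected.exists_walk_length_eq_dist v w
  let f : T →g T := ⟨fun v => g • v, fun {a b} h => hAct g a b h⟩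
  rw [← hp, ← Walk.length_map f p]
  exact dist_le (p.map f)

theorem act_dist {G V : Type*} [Group G] [MulAction G V] {T : SimpleGraph V}
    (hT : T.IsTree) (hAct : ActsByAut G T) (g : G) (v w : V) :
    T.dist (g • v) (g • w) = T.dist v w := by
  refine le_antisymm (act_dist_le hT hAct g v w) ?_
  have := act_dist_le hT hAct g⁻¹ (g • v) (g • w)
  simpa using this

theorem fix_double {G V : Type*} [Group G] [MulAction G V] {T : SimpleGraph V}
    (hT : T.IsTree) (hAct : ActsByAut G T) (g : G) (p q : V) (hp : g • p = p)
    (hmin : ∀ v : V, g • v = v → T.dist p q ≤ T.dist v q) (hpq : p ≠ q) :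
    T.dist q (g • q) = 2 * T.dist p q := by
  obtain ⟨w, hw⟩ := hT.connected.exists_walk_length_eq_dist p q
  cases w with
  | nil => exact absurd rfl hpq
  | @cons _ c _ hc r =>
    rw [Walk.length_cons] at hw
    have h1 := dist_le r
    have h2 : T.dist p q = T.dist c q + 1 := by
      have t := hT.connected.dist_triangle (u := p) (v := c) (w := q)
      rw [dist_eq_one_iff_adj.2 hc] at t
      omega
    have hne : c ≠ g • c := by
      intro h
      have := hmin c h.symm
      omega
    have h3 : T.dist p (g • q) = T.dist p q := by
      have := act_dist hT hAct g p q
      rwa [hp] at this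
    have hc' : T.Adj p (g • c) := by
      have := hAct g p c hc
      rwa [hp] at this
    have := tree_branch hT hc hc' hne h2 (by rw [h3, act_dist hT hAct, h2])
    rw [this, h3]; ring

/-- If `G` acts without edge inversions on a simplicial tree and `g1, g2`
are elliptic with `Fix(g1) ∩ Fix(g2) = ∅`, then `g1 * g2` is hyperbolic with translation
length `2 · d(Fix(g1), Fix(g2))`. -/
theorem statement5 {G V : Type*} [Group G] [MulAction G V] (T : SimpleGraph V)
    (hT : T.IsTree) (hAct : ActsByAut G T) (hNoInv : NoEdgeInversion G T)
    (g1 g2 : G) (hg1 : IsElliptic V g1) (hg2 : IsElliptic V g2)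
    (hdisj : Fixed V g1 ∩ Fixed V g2 = (∅ : Set V)) :
    IsHyperbolic V (g1 * g2) ∧
      transLen T (g1 * g2) = 2 * setDist T (Fixed V g1) (Fixed V g2) := by
  have iso := act_dist hT hAct
  have hne : {n : ℕ | ∃ v ∈ Fixed V g1, ∃ w ∈ Fixed V g2, T.dist v w = n}.Nonempty := by
    obtain ⟨v, hv⟩ := hg1
    obtain ⟨w, hw⟩ := hg2
    exact ⟨_, v, hv, w, hw, rfl⟩
  obtain ⟨p, hp, q, hq, hD⟩ := Nat.sInf_mem hne
  change T.dist p q = setDist T (Fixed V g1) (Fixed V g2) at hD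
  have hmin : ∀ v ∈ Fixed V g1, ∀ w ∈ Fixed V g2, T.dist p q ≤ T.dist v w := by
    intro v hv w hw
    rw [hD]
    exact Nat.sInf_le ⟨v, hv, w, hw, rfl⟩
  have hpq : p ≠ q := by
    rintro rfl
    have : p ∈ Fixed V g1 ∩ Fixed V g2 := ⟨hp, hq⟩
    rw [hdisj] at this
    exact this
  rw [← hD]
  have hp' : g1 • p = p := hp
  have hq' : g2 • q = q := hq
  have hpos := hT.connected.pos_dist_of_ne hpq
  have a1 : T.dist q (g1 • q) = 2 * T.dist p q :=
    fix_double hT hAct g1 p q hp (fun v hv => hmin v hv q hq) hpq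
  have a2 : T.dist p (g2 • p) = 2 * T.dist p q := by
    rw [fix_double hT hAct g2 q p hq (fun v hv => by
      rw [SimpleGraph.dist_comm (u := q), SimpleGraph.dist_comm (u := v)]; exact hmin p hp v hv) hpq.symm, SimpleGraph.dist_comm]
  set h := g1 * g2 with hh
  have hhq : h • q = g1 • q := by rw [hh, mul_smul, hq']
  have b0 : T.dist q p = T.dist p q := SimpleGraph.dist_comm
  have b1 : T.dist p (g1 • q) = T.dist p q := by
    have := iso g1 p q
    rwa [hp'] at this
  have b2 : T.dist (g1 • q) (h • p) = T.dist p q := by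
    rw [← hhq, iso, b0]
  have b3 : T.dist p (h • p) = 2 * T.dist p q := by
    rw [← a2, ← iso g1 p (g2 • p), hp', hh, mul_smul]
  have b4 : T.dist (h • p) (h • (h • q)) = T.dist p q := by
    rw [iso, hhq, b1]
  have b5 : T.dist (g1 • q) (h • (h • q)) = 2 * T.dist p q := by
    rw [← hhq, iso, hhq, a1]
  have n1 : p ≠ g1 • q := by
    intro e
    rw [← e, SimpleGraph.dist_self] at b1
    omega
  have n2 : g1 • q ≠ h • p := by
    intro e
    rw [e, SimpleGraph.dist_self] at b2
    omega
  have c1 := tree_concat hT (x := q) (y := p) (z := g1 • q) (w := h • p) n1 (by omega) (by omega)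
  have c2 := tree_concat hT (x := q) (y := g1 • q) (z := h • p) (w := h • (h • q)) n2
    (by omega) (by omega)
  have d1 : T.dist q (h • q) = 2 * T.dist p q := by rw [hhq, a1]
  have d2 : T.dist q (h • (h • q)) = 4 * T.dist p q := by omega
  have n3 : q ≠ h • q := by
    intro e
    rw [← e, SimpleGraph.dist_self] at d1
    omega
  have lin : ∀ n : ℕ, T.dist q (h ^ n • q) = n * (2 * T.dist p q) ∧
      T.dist q (h ^ (n + 1) • q) = (n + 1) * (2 * T.dist p q) := by
    intro n
    induction n with
    | zero => simp [d1]
    | succ n ih =>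
      obtain ⟨i1, i2⟩ := ih
      refine ⟨by rw [i2], ?_⟩
      have e1 : h ^ (n + 1) • q = h ^ n • (h • q) := by rw [pow_succ, mul_smul]
      have e2 : h ^ (n + 1 + 1) • q = h ^ n • (h • (h • q)) := by
        rw [pow_succ, pow_succ, mul_smul, mul_smul]
      have f1 : T.dist (h ^ n • q) (h ^ (n + 1) • q) = 2 * T.dist p q := by rw [e1, iso, d1]
      have f2 : T.dist (h ^ n • q) (h ^ (n + 1 + 1) • q) = 4 * T.dist p q := by rw [e2, iso, d2]
      have f3 : T.dist (h ^ (n + 1) • q) (h ^ (n + 1 + 1) • q) = 2 * T.dist p q := by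
        rw [e1, e2, iso, iso, d1]
      have n4 : h ^ n • q ≠ h ^ (n + 1) • q := by
        intro e
        rw [← e, SimpleGraph.dist_self] at f1
        omega
      rw [tree_concat hT n4 (by rw [i1, i2, f1]; ring) (by rw [f1, f2, f3]; ring), i1, f1, f3]
      push_cast; ring
  have up : ∀ (v : V) (n : ℕ), T.dist v (h ^ n • v) ≤ n * T.dist v (h • v) := by
    intro v n
    induction n with
    | zero => simp
    | succ n ih =>
      have t := hT.connected.dist_triangle (u := v) (v := h ^ n • v) (w := h ^ (n + 1) • v)
      have e : T.dist (h ^ n • v) (h ^ (n + 1) • v) = T.dist v (h • v) := by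
        rw [pow_succ, mul_smul, iso]
      rw [e] at t
      rw [add_mul, one_mul]
      omega
  have low : ∀ v : V, 2 * T.dist p q ≤ T.dist v (h • v) := by
    intro v
    by_contra hlt
    have hlt' : T.dist v (h • v) + 1 ≤ 2 * T.dist p q := by omega
    have key : ∀ n : ℕ, n ≤ 2 * T.dist q v := by
      intro n
      have t1 := hT.connected.dist_triangle (u := q) (v := v) (w := h ^ n • q)
      have t2 := hT.connected.dist_triangle (u := v) (v := h ^ n • v) (w := h ^ n • q)
      rw [iso, SimpleGraph.dist_comm (u := v) (v := q)] at t2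
      rw [(lin n).1] at t1
      have t3 := up v n
      have t4 := Nat.mul_le_mul_left n hlt'
      rw [mul_add, mul_one] at t4
      omega
    have := key (2 * T.dist q v + 1)
    omega
  refine ⟨?_, ?_⟩
  · rintro ⟨v, hv⟩
    have := low v
    rw [hv, SimpleGraph.dist_self] at this
    omega
  · have : Nonempty V := ⟨p⟩
    refine le_antisymm ?_ (le_ciInf low)
    rw [← d1]
    exact ciInf_le (OrderBot.bddBelow _) q
end

section
/- Let G be a group acting without edge inversions on a simplicial tree T, and let g1, g2 ∈ G be elliptic elements. For i = 1, 2 let T(g_i) denote the set of vertices fixed by some nontrivial power of g_i, i.e. the union of Fix(g_i^n) over all integers n with g_i^n ≠ 1. If T(g1) ∩ T(g2) = ∅, then g1 and g2 generate a rank 2 free product in G. -/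
open SimpleGraph Pointwise

/-- The set of vertices fixed by some nontrivial power of `g`. -/
def FixPowers {G : Type*} [Group G] (V : Type*) [MulAction G V] (g : G) : Set V :=
  {v | ∃ n : ℤ, g ^ n ≠ 1 ∧ (g ^ n) • v = v}

namespace FreeProductAux

section Words

open Monoid

/-- A version of ping-pong with base points, requiring no cardinality assumption. -/
theorem word_aux {ι G α : Type*} [Group G] [MulAction G α] {H : ι → Type*} [∀ i, Group (H i)]
    (f : ∀ i, H i →* G) (X : ι → Set α) (b : ι → α)
    (hb : ∀ i (h : H i), f i h • b i = b i)
    (hbX : ∀ i, b i ∈ X i)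
    (hdisj : ∀ i j, i ≠ j → ∀ v, v ∈ X i → v ∉ X j)
    (hpp : ∀ i j, i ≠ j → ∀ h : H i, h ≠ 1 → ∀ v ∈ X j, f i h • v ∈ X i)
    {i j k : ι} (w : CoprodI.NeWord H i j) (hk : j ≠ k) :
    ∀ v ∈ X k, CoprodI.lift f w.prod • v ∈ X i ∧ CoprodI.lift f w.prod • v ≠ b i := by
  induction w generalizing k with
  | @singleton i x hne =>
    intro v hv
    have e : CoprodI.lift f (CoprodI.NeWord.singleton x hne).prod = f i x := by simp
    rw [e]
    refine ⟨hpp _ _ hk x hne v hv, ?_⟩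
    intro h
    have h2 : f i x • v = f i x • b i := by rw [h, hb]
    have h3 := smul_left_cancel _ h2
    exact hdisj _ _ hk _ (hbX i) (h3 ▸ hv)
  | @append i j k' l w₁ hne w₂ h1 h2 =>
    intro v hv
    have e : CoprodI.lift f (CoprodI.NeWord.append w₁ hne w₂).prod • v =
        CoprodI.lift f w₁.prod • CoprodI.lift f w₂.prod • v := by simp [mul_smul]
    rw [e]
    exact h1 hne _ (h2 hk v hv).1

theorem lift_injective {ι G α : Type*} [Nontrivial ι] [Group G] [MulAction G α]
    {H : ι → Type*} [∀ i, Group (H i)]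
    (f : ∀ i, H i →* G) (X : ι → Set α) (b : ι → α)
    (hb : ∀ i (h : H i), f i h • b i = b i)
    (hbX : ∀ i, b i ∈ X i)
    (hdisj : ∀ i j, i ≠ j → ∀ v, v ∈ X i → v ∉ X j)
    (hpp : ∀ i j, i ≠ j → ∀ h : H i, h ≠ 1 → ∀ v ∈ X j, f i h • v ∈ X i) :
    Function.Injective (CoprodI.lift f) := by
  classical
  apply (injective_iff_map_eq_one (CoprodI.lift f)).mpr
  intro x hx
  obtain ⟨w, rfl⟩ : ∃ w : CoprodI.Word H, w.prod = x :=
    ⟨CoprodI.Word.equiv x, CoprodI.Word.equiv.symm_apply_apply x⟩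
  by_cases hw : w = CoprodI.Word.empty
  · rw [hw, CoprodI.Word.prod_empty]
  · exfalso
    obtain ⟨i, j, w, rfl⟩ := CoprodI.NeWord.of_word w hw
    obtain ⟨k, hk⟩ := exists_ne j
    have h := word_aux f X b hb hbX hdisj hpp w hk.symm (b k) (hbX k)
    have hx' : CoprodI.lift f w.prod = 1 := hx
    rw [hx', one_smul] at h
    by_cases hki : k = i
    · subst hki
      exact h.2 rfl
    · exact hdisj _ _ hki _ (hbX k) h.1

/-- Comparison of the binary coproduct with the indexed one. -/
theorem coprod_lift_injective {G : Type*} [Group G] (K : Bool → Subgroup G)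
    (h : Function.Injective (CoprodI.lift (fun i => (K i).subtype))) :
    Function.Injective (Coprod.lift (K true).subtype (K false).subtype) := by
  let φ : Coprod (K true) (K false) →* CoprodI (fun i => K i) :=
    Coprod.lift (CoprodI.of (M := fun i => K i) (i := true))
      (CoprodI.of (M := fun i => K i) (i := false))
  let ψ : CoprodI (fun i => K i) →* Coprod (K true) (K false) :=
    CoprodI.lift (fun i => match i with
      | true => Coprod.inl
      | false => Coprod.inr)
  have h1 : ψ.comp φ = MonoidHom.id _ := by
    apply Coprod.hom_ext
    · ext x; simp [φ, ψ]
    · ext x; simp [φ, ψ]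
  have h2 : (CoprodI.lift (fun i => (K i).subtype)).comp φ =
      Coprod.lift (K true).subtype (K false).subtype := by
    apply Coprod.hom_ext
    · ext x; simp [φ]
    · ext x; simp [φ]
  rw [← h2]
  refine h.comp ?_
  exact Function.LeftInverse.injective (g := ψ) (fun x => DFunLike.congr_fun h1 x)

theorem triv_left {G : Type*} [Group G] (b : G) : IsRank2FreeProduct (1 : G) b := by
  unfold IsRank2FreeProduct
  have key : ∀ x : Coprod (Subgroup.zpowers (1 : G)) (Subgroup.zpowers b),
      ∃ n, x = Coprod.inr n := by
    intro x
    induction x using Coprod.induction_on with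
    | inl m =>
      refine ⟨1, ?_⟩
      have : m = 1 := by
        obtain ⟨m, hm⟩ := m
        ext
        simpa using hm
      rw [this, map_one, map_one]
    | inr n => exact ⟨n, rfl⟩
    | mul x y hx hy =>
      obtain ⟨a, rfl⟩ := hx
      obtain ⟨c, rfl⟩ := hy
      exact ⟨a * c, (map_mul _ _ _).symm⟩
  intro x y hxy
  obtain ⟨a, rfl⟩ := key x
  obtain ⟨c, rfl⟩ := key y
  simp only [Coprod.lift_apply_inr] at hxy
  rw [Subtype.coe_injective hxy]

theorem triv_right {G : Type*} [Group G] (b : G) : IsRank2FreeProduct b (1 : G) := by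
  have h := triv_left b
  unfold IsRank2FreeProduct at h ⊢
  intro x y hxy
  rw [← Coprod.lift_swap _ _ x, ← Coprod.lift_swap _ _ y] at hxy
  have := h hxy
  exact Coprod.swap_injective this

end Words

section Tree

variable {V : Type*} {T : SimpleGraph V}

theorem path_length (hT : T.IsTree) {u v : V} (p : T.Walk u v) (hp : p.IsPath) :
    p.length = T.dist u v := by
  obtain ⟨q, hq, hl⟩ := hT.connected.exists_path_of_dist u v
  rw [(hT.existsUnique_path u v).unique hp hq, hl]

theorem between_unique (hT : T.IsTree) {p u y z : V}
    (hy : T.dist p u = T.dist p y + T.dist y u)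
    (hz : T.dist p u = T.dist p z + T.dist z u)
    (h : T.dist p y = T.dist p z) : y = z := by
  obtain ⟨a, ha⟩ := hT.connected.exists_walk_length_eq_dist p y
  obtain ⟨b, hb⟩ := hT.connected.exists_walk_length_eq_dist y u
  obtain ⟨c, hc⟩ := hT.connected.exists_walk_length_eq_dist p z
  obtain ⟨d, hd⟩ := hT.connected.exists_walk_length_eq_dist z u
  have h1 : (a.append b).IsPath := Walk.isPath_of_length_eq_dist _ (by
    rw [Walk.length_append]; omega)
  have h2 : (c.append d).IsPath := Walk.isPath_of_length_eq_dist _ (by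
    rw [Walk.length_append]; omega)
  have h3 := (hT.existsUnique_path p u).unique h1 h2
  have h4 : (a.append b).getVert a.length = y := by simp [Walk.getVert_append]
  have h5 : (c.append d).getVert a.length = z := by
    rw [ha, h, ← hc]; simp [Walk.getVert_append]
  rw [← h4, h3, h5]

theorem mem_geodesic {u v z : V} (w : T.Walk u v) (hw : w.length = T.dist u v)
    (hz : z ∈ w.support) : T.dist u z + T.dist z v ≤ T.dist u v := by
  classical
  have h := congrArg Walk.length (w.take_spec hz)
  rw [Walk.length_append] at h
  have h1 := T.dist_le (w.takeUntil z hz)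
  have h2 := T.dist_le (w.dropUntil z hz)
  omega

theorem cross (hT : T.IsTree) {x y p v : V} (hxy : T.Adj x y)
    (hp : T.dist p x < T.dist p y) (hv : T.dist v y < T.dist v x) :
    T.dist p v = T.dist p y + T.dist y v := by
  obtain ⟨a, ha⟩ := hT.connected.exists_walk_length_eq_dist p x
  obtain ⟨b, hb⟩ := hT.connected.exists_walk_length_eq_dist y v
  have hpa := Walk.isPath_of_length_eq_dist _ ha
  have hpb := Walk.isPath_of_length_eq_dist _ hb
  have hA : ∀ z ∈ a.support, T.dist z x < T.dist z y := by
    intro z hz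
    have h1 := mem_geodesic a ha hz
    have h2 := hT.connected.dist_triangle (u := p) (v := z) (w := y)
    omega
  have hB : ∀ z ∈ b.support, T.dist z y < T.dist z x := by
    intro z hz
    have h1 := mem_geodesic b hb hz
    have h2 := hT.connected.dist_triangle (u := v) (v := z) (w := x)
    have := T.dist_comm (u := z) (v := y)
    have := T.dist_comm (u := z) (v := v)
    have := T.dist_comm (u := y) (v := v)
    omega
  have hpath : (a.append (Walk.cons hxy b)).IsPath := by
    rw [Walk.isPath_def, Walk.support_append, Walk.support_cons, List.tail_cons]
    refine List.Nodup.append hpa.support_nodup hpb.support_nodup ?_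
    intro z hz1 hz2
    have := hA z hz1
    have := hB z hz2
    omega
  have hl := path_length hT _ hpath
  rw [Walk.length_append, Walk.length_cons] at hl
  have h1 := hT.dist_eq_dist_add_one_of_adj p hxy
  omega

theorem exists_edge (hT : T.IsTree) (A : V → Prop) {p q : V} (hp : A p) (hq : ¬ A q) :
    ∃ x y, T.Adj x y ∧ A x ∧ ¬ A y ∧ T.dist p x < T.dist p y ∧ T.dist q y < T.dist q x := by
  suffices H : ∀ n y, T.dist p y = n → ¬ A y → T.dist p y + T.dist y q = T.dist p q →
      ∃ x y, T.Adj x y ∧ A x ∧ ¬ A y ∧ T.dist p x < T.dist p y ∧ T.dist q y < T.dist q x from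
    H _ q rfl hq (by simp)
  intro n
  induction n with
  | zero =>
    intro y h hy
    rw [hT.connected.dist_eq_zero_iff] at h
    exact absurd (h ▸ hp) hy
  | succ n ih =>
    intro y h hy hb
    obtain ⟨w, hw⟩ := hT.connected.exists_walk_length_eq_dist y p
    rw [T.dist_comm, h] at hw
    cases w with
    | nil => simp at hw
    | @cons _ x _ hyx w' =>
      rw [Walk.length_cons] at hw
      have h1 := T.dist_le w'
      have h2 := hT.dist_eq_dist_add_one_of_adj p hyx
      have h3 := hT.dist_eq_dist_add_one_of_adj q hyx
      have h4 := hT.connected.dist_triangle (u := p) (v := x) (w := q)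
      have c1 := T.dist_comm (u := x) (v := p)
      have c2 := T.dist_comm (u := x) (v := q)
      have c3 := T.dist_comm (u := y) (v := q)
      by_cases hx : A x
      · exact ⟨x, y, hyx.symm, hx, hy, by omega, by omega⟩
      · exact ih x (by omega) hx (by omega)

theorem dist_smul_le {G : Type*} [Group G] [MulAction G V] (hT : T.IsTree)
    (hAct : ActsByAut G T) (g : G) (u v : V) : T.dist (g • u) (g • v) ≤ T.dist u v := by
  obtain ⟨a, ha⟩ := hT.connected.exists_walk_length_eq_dist u v
  let f : T →g T := ⟨fun v => g • v, fun {a b} h => hAct g a b h⟩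
  have h := T.dist_le (a.map f)
  rw [Walk.length_map, ha] at h
  exact h

theorem dist_smul {G : Type*} [Group G] [MulAction G V] (hT : T.IsTree)
    (hAct : ActsByAut G T) (g : G) (u v : V) : T.dist (g • u) (g • v) = T.dist u v := by
  refine le_antisymm (dist_smul_le hT hAct g u v) ?_
  simpa using dist_smul_le hT hAct g⁻¹ (g • u) (g • v)

/-- The basic ping-pong move across an edge. -/
theorem move {G : Type*} [Group G] [MulAction G V] (hT : T.IsTree)
    (hAct : ActsByAut G T) (g : G) {x y p v : V} (hxy : T.Adj x y)
    (hp : T.dist p x < T.dist p y) (hgp : g • p = p) (hgy : g • y ≠ y)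
    (hv : T.dist v y < T.dist v x) : T.dist (g • v) x < T.dist (g • v) y := by
  by_contra hcon
  have hne := hT.dist_ne_of_adj (g • v) hxy
  have h1 := cross hT hxy hp (v := g • v) (by omega)
  have h2 := cross hT hxy hp hv
  have e1 := dist_smul hT hAct g p v
  have e2 := dist_smul hT hAct g p y
  have e3 := dist_smul hT hAct g y v
  rw [hgp] at e1 e2
  exact hgy (between_unique hT (p := p) (u := g • v) (by omega) h1 e2)

end Tree

theorem zpow_fix {G V : Type*} [Group G] [MulAction G V] {g h : G} {v : V} (hv : g • v = v)
    (hh : h ∈ Subgroup.zpowers g) : h • v = v := by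
  have : Subgroup.zpowers g ≤ MulAction.stabilizer G v := by
    rw [Subgroup.zpowers_le]; exact hv
  exact this hh

theorem mem_fixPowers {G V : Type*} [Group G] [MulAction G V] {g h : G} {v : V} (hv : h • v = v)
    (hh : h ∈ Subgroup.zpowers g) (h1 : h ≠ 1) : v ∈ FixPowers V g := by
  obtain ⟨n, rfl⟩ := Subgroup.mem_zpowers_iff.mp hh
  exact ⟨n, h1, hv⟩

end FreeProductAux

open FreeProductAux

/-- If `G` acts without edge inversions on a simplicial tree, `g1, g2`
are elliptic, and `T(g1) ∩ T(g2) = ∅` (where `T(g)` is the set of vertices fixed by some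
nontrivial power of `g`), then `g1` and `g2` generate a rank 2 free product in `G`. -/
theorem statement6 {G V : Type*} [Group G] [MulAction G V] (T : SimpleGraph V)
    (hT : T.IsTree) (hAct : ActsByAut G T) (hNoInv : NoEdgeInversion G T)
    (g1 g2 : G) (hg1 : IsElliptic V g1) (hg2 : IsElliptic V g2)
    (hdisj : FixPowers V g1 ∩ FixPowers V g2 = (∅ : Set V)) :
    IsRank2FreeProduct g1 g2 := by
  by_cases h1 : g1 = 1
  · subst h1; exact triv_left g2
  by_cases h2 : g2 = 1
  · subst h2; exact triv_right g1
  obtain ⟨p, hp⟩ := hg1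
  obtain ⟨q, hq⟩ := hg2
  have hno : ∀ v, v ∈ FixPowers V g1 → v ∉ FixPowers V g2 := by
    intro v hv hv'
    have : v ∈ FixPowers V g1 ∩ FixPowers V g2 := ⟨hv, hv'⟩
    rw [hdisj] at this
    exact this
  have hpT : p ∈ FixPowers V g1 := mem_fixPowers hp (Subgroup.mem_zpowers g1) h1
  have hqT : q ∈ FixPowers V g2 := mem_fixPowers hq (Subgroup.mem_zpowers g2) h2
  obtain ⟨x, y, hxy, hx, hy, hpd, hqd⟩ :=
    exists_edge hT (fun v => v ∈ FixPowers V g1) hpT (fun h => hno q h hqT)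
  refine coprod_lift_injective
    (fun i => match i with
      | true => Subgroup.zpowers g1
      | false => Subgroup.zpowers g2) ?_
  refine lift_injective _
    (fun i => match i with
      | true => {v : V | T.dist v x < T.dist v y}
      | false => {v : V | T.dist v y < T.dist v x})
    (fun i => match i with
      | true => p
      | false => q) ?_ ?_ ?_ ?_
  · rintro (_ | _) ⟨h, hh⟩
    · exact zpow_fix hq hh
    · exact zpow_fix hp hh
  · rintro (_ | _)
    · exact hqd
    · exact hpd
  · rintro (_ | _) (_ | _) hij v hv hv'
    · exact hij rfl
    · exact lt_asymm (show T.dist v y < T.dist v x from hv) hv'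
    · exact lt_asymm (show T.dist v x < T.dist v y from hv) hv'
    · exact hij rfl
  · rintro (_ | _) (_ | _) hij ⟨h, hh⟩ hne v hv
    · exact absurd rfl hij
    · refine move hT hAct h hxy.symm hqd (zpow_fix hq hh) ?_ hv
      intro hfix
      exact hno x hx (mem_fixPowers hfix hh (fun e => hne (Subtype.ext e)))
    · refine move hT hAct h hxy hpd (zpow_fix hp hh) ?_ hv
      intro hfix
      exact hy (mem_fixPowers hfix hh (fun e => hne (Subtype.ext e)))
    · exact absurd rfl hij
end
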